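/- For any pair (π̃, φ) ∈ E and every continuous bounded function f : Ω_0 × U_d → ℝ, P_0-almost surely in ω and P^{π̃,ω}_0-almost surely, (1/n) Σ_{k=0}^{n−1} f(τ_{X_k}ω, X_{k+1}−X_k) converges as n → ∞ to ∫_{Ω_0} φ(ω) Σ_{e∈U_d} f(ω,e) π̃(ω,e) dP_0(ω). -/

import Mathlib

open MeasureTheory ProbabilityTheory Filter Topology
open scoped ENNReal NNReal BigOperators

noncomputable section

namespace SRWPC

/-- Vertices of the lattice `ℤ^d`. -/
abbrev V (d : ℕ) := Fin d → ℤ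

/-- Index of a nearest-neighbour bond: the bond from `x` to `x + eᵢ`. -/
abbrev EdgeIx (d : ℕ) := V d × Fin d

/-- Percolation configurations `Ω = {0,1}^{𝔹_d}`. -/
abbrev Config (d : ℕ) := EdgeIx d → Bool

/-- The `i`-th coordinate unit vector. -/
def unitVec (d : ℕ) (i : Fin d) : V d := fun j => if j = i then 1 else 0

/-- The set `𝕌_d` of the `2d` unit vectors. -/
def Ud (d : ℕ) : Finset (V d) :=
  (Finset.univ.image (unitVec d)) ∪ (Finset.univ.image (fun i => -unitVec d i))

/-- The type of nearest-neighbour steps (elements of `𝕌_d`). -/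
abbrev Step (d : ℕ) := {e : V d // e ∈ Ud d}

/-- The shift `(τ_x ω)_b = ω_{x+b}`. -/
def shift {d : ℕ} (x : V d) (ω : Config d) : Config d := fun b => ω (b.1 + x, b.2)

/-- The bond from `x` to `x + e` is open in `ω`. -/
def edgeOpen {d : ℕ} (ω : Config d) (x e : V d) : Prop :=
  ∃ i : Fin d, (e = unitVec d i ∧ ω (x, i) = true) ∨
    (e = -unitVec d i ∧ ω (x - unitVec d i, i) = true)

open Classical in
/-- The number of open bonds incident to `x`. -/
def openDeg {d : ℕ} (ω : Config d) (x : V d) : ℕ :=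
  ((Ud d).filter (fun e => edgeOpen ω x e)).card

open Classical in
/-- The transition probability `π_ω(x,e)` of the simple random walk on the cluster. -/
def trans {d : ℕ} (ω : Config d) (x e : V d) : ℝ :=
  if edgeOpen ω x e then 1 / openDeg ω x else 0

/-- `γ` restricted to `{0,…,n}` is a nearest-neighbour open path in `ω`. -/
def IsOpenPath {d : ℕ} (ω : Config d) (γ : ℕ → V d) (n : ℕ) : Prop :=
  ∀ k < n, (γ (k + 1) - γ k) ∈ Ud d ∧ edgeOpen ω (γ k) (γ (k + 1) - γ k)

/-- `x` lies in the box `[-r,r]^d`. -/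
def inBox {d : ℕ} (x : V d) (r : ℝ) : Prop := ∀ i, |(x i : ℝ)| ≤ r

/-- `x` is joined to infinity by a nearest-neighbour open path, i.e. `x ∈ 𝒞_∞(ω)`. -/
def memCluster {d : ℕ} (ω : Config d) (x : V d) : Prop :=
  ∀ R : ℕ, ∃ (γ : ℕ → V d) (n : ℕ), γ 0 = x ∧ IsOpenPath ω γ n ∧ ¬ inBox (γ n) R

/-- The event `Ω_0 = {0 ∈ 𝒞_∞}`. -/
def cluZero (d : ℕ) : Set (Config d) := {ω | memCluster ω 0}

/-- `P` is the Bernoulli bond percolation product measure with parameter `q`. -/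
def IsBernoulli (d : ℕ) (q : ℝ) (P : Measure (Config d)) : Prop :=
  IsProbabilityMeasure P ∧
    ∀ (F : Finset (EdgeIx d)) (a : EdgeIx d → Bool),
      P {ω | ∀ b ∈ F, ω b = a b} = ∏ b ∈ F, ENNReal.ofReal (if a b then q else 1 - q)

/-- The critical probability `p_c(d)` of bond percolation on `ℤ^d`. -/
def pc (d : ℕ) : ℝ :=
  sInf {q : ℝ | q ∈ Set.Icc (0 : ℝ) 1 ∧
    ∀ P : Measure (Config d), IsBernoulli d q P → 0 < P (cluZero d)}

variable {d : ℕ}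

/-- Position of the walk after `k` steps, given the sequence of steps `s`. -/
def pos {n : ℕ} (s : Fin n → Step d) (k : ℕ) : V d :=
  ∑ j ∈ Finset.univ.filter (fun j : Fin n => (j : ℕ) < k), (s j).1

/-- The environment/step pair `(τ_{X_k} ω, X_{k+1} - X_k)` seen at time `k`. -/
def envPair (ω : Config d) {n : ℕ} (s : Fin n → Step d) (k : Fin n) : Config d × Step d :=
  (shift (pos s k) ω, s k)

/-- Quenched probability of a given sequence of `n` steps under the Markov kernel `κ`. -/
def pathProb (κ : Config d → Step d → ℝ) (ω : Config d) {n : ℕ} (s : Fin n → Step d) : ℝ :=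
  ∏ k : Fin n, κ (shift (pos s k) ω) (s k)

/-- The SRWPC transition kernel `π`. -/
def srw (d : ℕ) : Config d → Step d → ℝ := fun ω e => trans ω 0 e.1

/-- Quenched expectation (under `P_0^{κ,ω}`) of a functional of the first `n` steps. -/
def qE (κ : Config d → Step d → ℝ) (ω : Config d) {n : ℕ} (F : (Fin n → Step d) → ℝ) : ℝ :=
  ∑ s : Fin n → Step d, pathProb κ ω s * F s

/-- Quenched probability (under `P_0^{κ,ω}`) of a set of `n`-step trajectories. -/
def qP (κ : Config d → Step d → ℝ) (ω : Config d) {n : ℕ} (A : Set (Fin n → Step d)) : ℝ :=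
  ∑ s : Fin n → Step d, A.indicator (fun s' => pathProb κ ω s') s

/-- Quenched probability, `ℝ≥0∞`-valued. -/
def qPE (κ : Config d → Step d → ℝ) (ω : Config d) {n : ℕ} (A : Set (Fin n → Step d)) : ℝ≥0∞ :=
  ENNReal.ofReal (qP κ ω A)

/-- The environment-step space `Ω_0 × 𝕌_d`. -/
abbrev EnvSp (d : ℕ) := Config d × Step d

/-- The pair empirical measure `ℒ_n` as a measure. -/
def empMeas (ω : Config d) {n : ℕ} (s : Fin n → Step d) : Measure (EnvSp d) :=
  (n : ℝ≥0∞)⁻¹ • ∑ k : Fin n, Measure.dirac (envPair ω s k)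

lemma empMeas_isProb (ω : Config d) {n : ℕ} (hn : n ≠ 0) (s : Fin n → Step d) :
    IsProbabilityMeasure (empMeas ω s) := by
  constructor
  simp only [empMeas, Measure.smul_apply, Measure.coe_finset_sum, Finset.sum_apply,
    Measure.dirac_apply_of_mem (Set.mem_univ _), smul_eq_mul]
  rw [Finset.sum_const, Finset.card_univ, Fintype.card_fin, nsmul_eq_mul, mul_one,
    ENNReal.inv_mul_cancel]
  · exact_mod_cast hn
  · exact ENNReal.natCast_ne_top n

/-- The pair empirical measure `ℒ_{n+1}` as a probability measure. -/
def empPM (ω : Config d) {n : ℕ} (s : Fin (n + 1) → Step d) : ProbabilityMeasure (EnvSp d) :=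
  ⟨empMeas ω s, empMeas_isProb ω (Nat.succ_ne_zero n) s⟩

/-- First marginal `(μ)_1` of a measure on `Ω_0 × 𝕌_d`. -/
def marg1 (μ : Measure (EnvSp d)) : Measure (Config d) := μ.map Prod.fst

/-- Second marginal `(μ)_2` of a measure on `Ω_0 × 𝕌_d`. -/
def marg2 (μ : Measure (EnvSp d)) : Measure (Config d) := μ.map (fun q => shift q.2.1 q.1)

/-- The slice `dμ(·, e)` of a measure on `Ω_0 × 𝕌_d` at a fixed step `e`. -/
def slice (μ : Measure (EnvSp d)) (e : Step d) : Measure (Config d) :=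
  (μ.restrict (Set.univ ×ˢ {e})).map Prod.fst

/-- The space `ℳ_1⋆`: probability measures on `Ω_0 × 𝕌_d` whose two marginals coincide and
are absolutely continuous w.r.t. `P₀`, and whose densities `dμ(ω,e)/d(μ)_1(ω)` are positive
precisely on open edges, `P₀`-a.s. -/
def M1star (d : ℕ) (P₀ : Measure (Config d)) : Set (ProbabilityMeasure (EnvSp d)) :=
  {μ | marg1 μ.toMeasure = marg2 μ.toMeasure ∧ marg1 μ.toMeasure ≪ P₀ ∧
    ∃ ρ : Step d → Config d → ℝ≥0∞, (∀ e, Measurable (ρ e)) ∧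
      (∀ e, slice μ.toMeasure e = (marg1 μ.toMeasure).withDensity (ρ e)) ∧
      (∀ e : Step d, ∀ᵐ ω ∂P₀, (0 < ρ e ω ↔ edgeOpen ω 0 e.1))}

/-- The reference measure `π_ω(0,e) d(μ)_1(ω)` on `Ω_0 × 𝕌_d`. -/
def refM (μ : Measure (EnvSp d)) : Measure (EnvSp d) :=
  Measure.sum (fun e : Step d =>
    ((marg1 μ).withDensity (fun ω => ENNReal.ofReal (trans ω 0 e.1))).map (fun ω => (ω, e)))

/-- `x log x - x + 1`. -/
def klFun (x : ℝ) : ℝ := x * Real.log x - x + 1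

open Classical in
/-- The entropy functional `ℑ` (a relative entropy with respect to `refM μ`;
it equals `∫ Σ_e dμ(ω,e) log[dμ(ω,e) / (d(μ)_1(ω) π_ω(0,e))]` on `ℳ_1⋆` and `∞` otherwise). -/
def entI (P₀ : Measure (Config d)) (μ : ProbabilityMeasure (EnvSp d)) : ℝ≥0∞ :=
  if μ ∈ M1star d P₀ ∧ μ.toMeasure ≪ refM μ.toMeasure then
    ∫⁻ q, ENNReal.ofReal (klFun ((μ.toMeasure.rnDeriv (refM μ.toMeasure)) q).toReal)
      ∂(refM μ.toMeasure)
  else ∞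

/-- The pairing `⟨f, μ⟩`. -/
def pairing (f : EnvSp d → ℝ) (μ : ProbabilityMeasure (EnvSp d)) : ℝ :=
  ∫ q, f q ∂μ.toMeasure

/-- The Fenchel–Legendre transform `ℑ⋆` of `ℑ`. -/
def entIstar (P₀ : Measure (Config d)) (f : BoundedContinuousFunction (EnvSp d) ℝ) : EReal :=
  ⨆ μ : ProbabilityMeasure (EnvSp d),
    ((pairing f μ : ℝ) : EReal) - ((entI P₀ μ : ℝ≥0∞) : EReal)

/-- The double Fenchel–Legendre transform `ℑ⋆⋆` of `ℑ`. -/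
def entIbis (P₀ : Measure (Config d)) (μ : ProbabilityMeasure (EnvSp d)) : EReal :=
  ⨆ f : BoundedContinuousFunction (EnvSp d) ℝ,
    ((pairing f μ : ℝ) : EReal) - entIstar P₀ f

/-- The contraction map `ξ(μ) = ∫ Σ_e e dμ(ω,e)`. -/
def xi (μ : ProbabilityMeasure (EnvSp d)) : Fin d → ℝ :=
  fun i => ∫ q, ((q.2.1 i : ℤ) : ℝ) ∂μ.toMeasure

/-- The mean velocity `X_n / n` of a trajectory. -/
def meanVel {n : ℕ} (s : Fin n → Step d) : Fin d → ℝ :=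
  fun i => (n : ℝ)⁻¹ * ((pos s n) i : ℝ)

/-- The class `Π̃` of environment transition kernels. -/
def PiT (d : ℕ) (P₀ : Measure (Config d)) : Set (Config d → Step d → ℝ) :=
  {κ | (∀ e : Step d, Measurable (fun ω => κ ω e)) ∧
    (∀ ω e, 0 ≤ κ ω e) ∧ (∀ e : Step d, ∀ᵐ ω ∂P₀, κ ω e ≤ 1) ∧
    (∀ᵐ ω ∂P₀, ∑ e : Step d, κ ω e = 1) ∧
    (∀ e : Step d, ∀ᵐ ω ∂P₀, (κ ω e = 0 ↔ trans ω 0 e.1 = 0))}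

/-- `φ dP₀` is an invariant probability density for the kernel `κ`. -/
def IsInvDensity (P₀ : Measure (Config d)) (κ : Config d → Step d → ℝ)
    (φ : Config d → ℝ) : Prop :=
  Measurable φ ∧ (∀ ω, 0 ≤ φ ω) ∧ (∫ ω, φ ω ∂P₀) = 1 ∧
    (∀ᵐ ω ∂P₀, φ ω = ∑ e : Step d, κ (shift (-e.1) ω) e * φ (shift (-e.1) ω))

/-- The set `ℰ` of pairs `(π̃, φ)`. -/
def Epairs (d : ℕ) (P₀ : Measure (Config d)) :
    Set ((Config d → Step d → ℝ) × (Config d → ℝ)) :=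
  {q | q.1 ∈ PiT d P₀ ∧ IsInvDensity P₀ q.1 q.2}

/-- The measure `dμ(ω,e) = π̃(ω,e) φ(ω) dP₀(ω)` associated with a pair `(π̃, φ)`. -/
def pairMeasure (P₀ : Measure (Config d)) (κ : Config d → Step d → ℝ)
    (φ : Config d → ℝ) : Measure (EnvSp d) :=
  Measure.sum (fun e : Step d =>
    (P₀.withDensity (fun ω => ENNReal.ofReal (κ ω e * φ ω))).map (fun ω => (ω, e)))

/-- The kernel `dμ/d(μ)_1` associated with a measure on `Ω_0 × 𝕌_d`. -/
def toKappa (μ : Measure (EnvSp d)) : Config d → Step d → ℝ :=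
  fun ω e => ((slice μ e).rnDeriv (marg1 μ) ω).toReal

/-- The density `d(μ)_1/dP₀` associated with a measure on `Ω_0 × 𝕌_d`. -/
def toPhi (P₀ : Measure (Config d)) (μ : Measure (EnvSp d)) : Config d → ℝ :=
  fun ω => ((marg1 μ).rnDeriv P₀ ω).toReal

/-- The environment Markov transition operator `R_κ`. -/
def kernelStep (κ : Config d → Step d → ℝ) (f : Config d → ℝ) : Config d → ℝ :=
  fun ω => ∑ e : Step d, κ ω e * f (shift e.1 ω)

/-- `Q` is an invariant measure for the environment kernel `R_κ`. -/
def IsInvariant (κ : Config d → Step d → ℝ) (Q : Measure (Config d)) : Prop :=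
  ∀ f : Config d → ℝ, Measurable f → (∃ C, ∀ ω, |f ω| ≤ C) →
    ∫ ω, kernelStep κ f ω ∂Q = ∫ ω, f ω ∂Q

/-- Partial sum `Σ_{k<m} f(τ_{X_k}ω, X_{k+1}-X_k)` along a trajectory of length `N`. -/
def partialSumF (f : EnvSp d → ℝ) (ω : Config d) {N : ℕ} (s : Fin N → Step d) (m : ℕ) : ℝ :=
  ∑ k ∈ Finset.univ.filter (fun k : Fin N => (k : ℕ) < m), f (envPair ω s k)

/-- The sum of `G` along the path `γ` up to time `n`. -/
def pathSum (G : Config d → V d → ℝ) (ω : Config d) (γ : ℕ → V d) (n : ℕ) : ℝ :=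
  ∑ k ∈ Finset.range n, G (shift (γ k) ω) (γ (k + 1) - γ k)

/-- The class `𝒢_∞` of gradients: zero mean, uniformly bounded, closed loops. -/
def Ginfty (d : ℕ) (P₀ : Measure (Config d)) : Set (Config d → V d → ℝ) :=
  {G | (∀ e ∈ Ud d, Measurable (fun ω => G ω e)) ∧
    (∀ e ∈ Ud d, ∫ ω, G ω e ∂P₀ = 0) ∧
    (∃ M : ℝ, ∀ e ∈ Ud d, ∀ᵐ ω ∂P₀, |G ω e| ≤ M) ∧
    (∀ᵐ ω ∂P₀, ∀ (γ : ℕ → V d) (n : ℕ),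
      memCluster ω (γ 0) → IsOpenPath ω γ n → γ n = γ 0 → pathSum G ω γ n = 0)}

open Classical in
/-- The corrector `Ψ(ω,x)`: the sum of `G` along some open path from `0` to `x`. -/
def corr (G : Config d → V d → ℝ) (ω : Config d) (x : V d) : ℝ :=
  if h : ∃ q : (ℕ → V d) × ℕ, q.1 0 = 0 ∧ q.1 q.2 = x ∧ IsOpenPath ω q.1 q.2
  then pathSum G ω h.choose.1 h.choose.2 else 0

/-- The chemical distance: minimal length of an open path joining `x` and `y`. -/
def chemDist (ω : Config d) (x y : V d) : ℕ :=
  sInf {n : ℕ | ∃ γ : ℕ → V d, γ 0 = x ∧ γ n = y ∧ IsOpenPath ω γ n}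

open Classical in
/-- The functional `Λ(f,G)`. -/
def Lam (P₀ : Measure (Config d)) (f : EnvSp d → ℝ) (G : Config d → V d → ℝ) : EReal :=
  essSup (fun ω => ((Real.log (∑ e : Step d,
    if edgeOpen ω 0 e.1 then trans ω 0 e.1 * Real.exp (f (ω, e) + G ω e.1) else 0)) : EReal)) P₀

/-- The variational formula `H̄(f) = sup_{μ ∈ ℳ_1⋆} {⟨f,μ⟩ - ℑ(μ)}`. -/
def Hbar (P₀ : Measure (Config d)) (f : EnvSp d → ℝ) : EReal :=
  ⨆ μ ∈ M1star d P₀, ((pairing f μ : ℝ) : EReal) - ((entI P₀ μ : ℝ≥0∞) : EReal)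

/-- The finite σ-algebra `𝓑_k` recording all bonds in the box of size `k` around the origin. -/
def Bsig (d k : ℕ) : MeasurableSpace (Config d) :=
  MeasurableSpace.comap
    (fun (ω : Config d) (b : {b : EdgeIx d // ∀ i, |b.1 i| ≤ (k : ℤ)}) => ω b.1) inferInstance

end SRWPC

namespace SRWPC

set_option linter.unusedSectionVars false
section Birkhoff

variable {α : Type*} [MeasurableSpace α] {μ : Measure α}

/-- The running maximum of Birkhoff sums (with `0` included). -/
def runMax (T : α → α) (f : α → ℝ) : ℕ → α → ℝ
  | 0, _ => 0
  | n + 1, x => max 0 (f x + runMax T f n (T x))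

lemma runMax_nonneg (T : α → α) (f : α → ℝ) (n : ℕ) (x : α) : 0 ≤ runMax T f n x := by
  cases n with
  | zero => simp [runMax]
  | succ n => simp [runMax]

lemma runMax_le_succ (T : α → α) (f : α → ℝ) (n : ℕ) :
    ∀ x, runMax T f n x ≤ runMax T f (n + 1) x := by
  induction n with
  | zero => intro x; simp [runMax]
  | succ n ih =>
    intro x
    have := ih (T x)
    rw [runMax, runMax]
    exact max_le_max le_rfl (by linarith)

lemma runMax_mono (T : α → α) (f : α → ℝ) (x : α) : Monotone (fun n => runMax T f n x) :=
  monotone_nat_of_le_succ (fun n => runMax_le_succ T f n x)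

lemma birkhoffSum_le_runMax (T : α → α) (f : α → ℝ) (n : ℕ) :
    ∀ x, birkhoffSum T f n x ≤ runMax T f n x := by
  induction n with
  | zero => intro x; simp [runMax]
  | succ n ih =>
    intro x
    rw [birkhoffSum_succ', runMax]
    exact le_max_of_le_right (by linarith [ih (T x)])

lemma runMax_measurable {T : α → α} {f : α → ℝ} (hT : Measurable T) (hf : Measurable f) (n : ℕ) :
    Measurable (runMax T f n) := by
  induction n with
  | zero => exact measurable_const
  | succ n ih => exact measurable_const.max (hf.add (ih.comp hT))

lemma runMax_le {T : α → α} {f : α → ℝ} {C : ℝ} (hC : ∀ x, |f x| ≤ C) (n : ℕ) :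
    ∀ x, runMax T f n x ≤ n * C := by
  induction n with
  | zero => intro x; simp [runMax]
  | succ n ih =>
    intro x
    have h1 := ih (T x)
    have h2 := abs_le.1 (hC x)
    have h3 : 0 ≤ C := (abs_nonneg _).trans (hC x)
    have h4 : (0 : ℝ) ≤ n * C := by positivity
    rw [runMax]
    push_cast
    exact max_le (by nlinarith) (by linarith)

lemma bdd_integrable [IsFiniteMeasure μ] {f : α → ℝ} (hf : Measurable f) {C : ℝ}
    (hC : ∀ x, |f x| ≤ C) : Integrable f μ :=
  Integrable.of_bound hf.aestronglyMeasurable C (Filter.Eventually.of_forall hC)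

/-- The maximal ergodic inequality. -/
lemma maximal_ergodic [IsFiniteMeasure μ] {T : α → α} (hT : MeasurePreserving T μ μ)
    {f : α → ℝ} (hf : Measurable f) {C : ℝ} (hC : ∀ x, |f x| ≤ C) (n : ℕ) :
    0 ≤ ∫ x, {x | 0 < runMax T f n x}.indicator f x ∂μ := by
  have hm := runMax_measurable hT.measurable hf n
  have hb : ∀ x, |runMax T f n x| ≤ n * C := fun x => by
    rw [abs_of_nonneg (runMax_nonneg T f n x)]; exact runMax_le hC n x
  have hi : Integrable (runMax T f n) μ := bdd_integrable hm hb
  have hi2 : Integrable (fun x => runMax T f n (T x)) μ :=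
    bdd_integrable (hm.comp hT.measurable) (fun x => hb _)
  have hs : MeasurableSet {x | 0 < runMax T f n x} := measurableSet_lt measurable_const hm
  have h0 : ∫ x, (runMax T f n x - runMax T f n (T x)) ∂μ = 0 := by
    rw [integral_sub hi hi2, sub_eq_zero]
    have := integral_map (μ := μ) hT.measurable.aemeasurable
      (f := runMax T f n) hm.aestronglyMeasurable
    rw [hT.map_eq] at this
    exact this
  refine h0.symm.le.trans ?_
  refine integral_mono (hi.sub hi2) ((bdd_integrable hf hC).indicator hs) ?_
  intro x
  by_cases hx : 0 < runMax T f n x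
  · have : x ∈ {x | 0 < runMax T f n x} := hx
    simp only [Set.indicator_of_mem this]
    cases n with
    | zero => simp [runMax] at hx
    | succ n =>
      have h1 := runMax_le_succ T f n (T x)
      have h2 : runMax T f (n + 1) x = f x + runMax T f n (T x) := by
        rw [runMax] at hx ⊢
        rcases lt_max_iff.1 hx with h | h
        · exact absurd h (lt_irrefl _)
        · exact max_eq_right h.le
      linarith
  · have : x ∉ {x | 0 < runMax T f n x} := hx
    simp only [Set.indicator_of_notMem this]
    have := runMax_nonneg T f n (T x)
    linarith [not_lt.1 hx]

lemma integral_nonneg_of_exists_pos [IsFiniteMeasure μ] {T : α → α} (hT : MeasurePreserving T μ μ)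
    {f : α → ℝ} (hf : Measurable f) {C : ℝ} (hC : ∀ x, |f x| ≤ C)
    (h : ∀ᵐ x ∂μ, ∃ n, 0 < birkhoffSum T f n x) : 0 ≤ ∫ x, f x ∂μ := by
  have hs : ∀ n, MeasurableSet {x | 0 < runMax T f n x} := fun n =>
    measurableSet_lt measurable_const (runMax_measurable hT.measurable hf n)
  have : Tendsto (fun n => ∫ x, {x | 0 < runMax T f n x}.indicator f x ∂μ) atTop
      (𝓝 (∫ x, f x ∂μ)) := by
    refine tendsto_integral_of_dominated_convergence (fun _ => C)
      (fun n => (hf.indicator (hs n)).aestronglyMeasurable) (integrable_const _) ?_ ?_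
    · intro n
      refine Filter.Eventually.of_forall fun x => ?_
      exact (norm_indicator_le_norm_self _ _).trans (hC x)
    · filter_upwards [h] with x hx
      obtain ⟨n, hn⟩ := hx
      refine tendsto_const_nhds.congr' ?_
      filter_upwards [eventually_ge_atTop n] with m hm
      have : x ∈ {x | 0 < runMax T f m x} :=
        lt_of_lt_of_le hn ((birkhoffSum_le_runMax T f n x).trans (runMax_mono T f x hm))
      rw [Set.indicator_of_mem this]
  exact ge_of_tendsto' this (fun n => maximal_ergodic hT hf hC n)

lemma birkhoff_upper [IsProbabilityMeasure μ] {T : α → α} (hT : Ergodic T μ)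
    {f : α → ℝ} (hf : Measurable f) {C : ℝ} (hC : ∀ x, |f x| ≤ C) {a : ℝ}
    (ha : ∫ x, f x ∂μ < a) :
    ∀ᵐ x ∂μ, ∀ k : ℕ, ∀ᶠ n in atTop, birkhoffAverage ℝ T f n x ≤ a + 1 / (k + 1) := by
  have hTm := hT.measurable
  have hmeas : ∀ n, Measurable (birkhoffAverage ℝ T f n) := fun n => by
    unfold birkhoffAverage birkhoffSum
    have : Measurable (fun x => ∑ k ∈ Finset.range n, f (T^[k] x)) :=
      Finset.measurable_sum _ fun k _ => hf.comp (hTm.iterate k)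
    exact this.const_smul ((n : ℝ)⁻¹)
  set D : Set α := {x | ∃ k : ℕ, ∃ᶠ n in atTop, a + 1 / ((k : ℝ) + 1) < birkhoffAverage ℝ T f n x}
    with hD
  have hDm : MeasurableSet D := by
    have : D = ⋃ k : ℕ, ⋂ N : ℕ, ⋃ n : ℕ, ⋃ _ : N ≤ n,
        {x | a + 1 / ((k : ℝ) + 1) < birkhoffAverage ℝ T f n x} := by
      ext x; simp [hD, frequently_atTop]
    rw [this]
    refine MeasurableSet.iUnion fun k => MeasurableSet.iInter fun N => MeasurableSet.iUnion fun n =>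
      MeasurableSet.iUnion fun _ => measurableSet_lt measurable_const (hmeas n)
  have hsub : D ⊆ T ⁻¹' D := by
    rintro x ⟨k, hk⟩
    refine ⟨k + 1, ?_⟩
    have hlim : Tendsto (fun n => birkhoffAverage ℝ T f n (T x) - birkhoffAverage ℝ T f n x)
        atTop (𝓝 0) := by
      apply tendsto_birkhoffAverage_apply_sub_birkhoffAverage
      refine (Metric.isBounded_iff_subset_closedBall 0).2 ⟨C, ?_⟩
      rintro _ ⟨n, rfl⟩
      simpa using hC _
    have hpos : (1 : ℝ) / ((k + 1 : ℕ) + 1) - 1 / ((k : ℝ) + 1) < 0 := by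
      rw [sub_neg]
      apply one_div_lt_one_div_of_lt
      · positivity
      · push_cast; linarith
    have hev := hlim.eventually (lt_mem_nhds hpos)
    refine (hk.and_eventually hev).mono ?_
    rintro n ⟨h1, h2⟩
    linarith
  rcases hT.ae_empty_or_univ_of_ae_le_preimage hDm.nullMeasurableSet
      (LE.le.eventuallyLE hsub) with h | h
  · have h' : ∀ᵐ x ∂μ, x ∉ D := by
      filter_upwards [h] with x hx hxD
      have : (x ∈ D) = (x ∈ (∅ : Set α)) := hx
      rw [this] at hxD; exact hxD
    filter_upwards [h'] with x hx k
    by_contra hcon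
    refine hx ⟨k, ?_⟩
    rw [Filter.not_eventually] at hcon
    exact hcon.mono fun n hn => not_le.1 hn
  · exfalso
    have h' : ∀ᵐ x ∂μ, x ∈ D := by
      filter_upwards [h] with x hx
      have : (x ∈ D) = (x ∈ (Set.univ : Set α)) := hx
      rw [this]; trivial
    have h2 : 0 ≤ ∫ x, (f x - a) ∂μ := by
      refine integral_nonneg_of_exists_pos (T := T) hT.toMeasurePreserving (hf.sub_const a)
        (C := C + |a|) (fun x => (abs_sub _ _).trans (by linarith [hC x])) ?_
      filter_upwards [h'] with x hx
      obtain ⟨k, hk⟩ := hx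
      obtain ⟨n, hn, hn1⟩ := (hk.and_eventually (eventually_ge_atTop 1)).exists
      refine ⟨n, ?_⟩
      have hn0 : (0 : ℝ) < n := by exact_mod_cast hn1
      have e : birkhoffSum T (fun x => f x - a) n x = birkhoffSum T f n x - n * a := by
        simp [birkhoffSum, Finset.sum_sub_distrib]
      rw [e]
      have h3 : a < birkhoffAverage ℝ T f n x := by
        have : (0 : ℝ) < 1 / ((k : ℝ) + 1) := by positivity
        linarith
      rw [birkhoffAverage, smul_eq_mul, inv_mul_eq_div, lt_div_iff₀ hn0] at h3
      linarith
    rw [integral_sub (bdd_integrable hf hC) (integrable_const _)] at h2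
    simp at h2
    linarith

/-- Birkhoff's pointwise ergodic theorem (bounded observables, ergodic case). -/
theorem birkhoff_pointwise [IsProbabilityMeasure μ] {T : α → α} (hT : Ergodic T μ)
    {f : α → ℝ} (hf : Measurable f) {C : ℝ} (hC : ∀ x, |f x| ≤ C) :
    ∀ᵐ x ∂μ, Tendsto (fun n => birkhoffAverage ℝ T f n x) atTop (𝓝 (∫ x, f x ∂μ)) := by
  set I := ∫ x, f x ∂μ with hI
  have up : ∀ g : α → ℝ, Measurable g → (∀ x, |g x| ≤ C) →
      ∀ᵐ x ∂μ, ∀ j : ℕ, ∀ᶠ n in atTop,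
        birkhoffAverage ℝ T g n x ≤ (∫ x, g x ∂μ) + 1 / (j + 1) + 1 / (j + 1) := by
    intro g hg hgC
    rw [ae_all_iff]
    intro j
    have : ∫ x, g x ∂μ < (∫ x, g x ∂μ) + 1 / ((j : ℝ) + 1) := by
      have : (0 : ℝ) < 1 / ((j : ℝ) + 1) := by positivity
      linarith
    filter_upwards [birkhoff_upper hT hg hgC this] with x hx
    exact hx j
  filter_upwards [up f hf hC, up (fun x => - f x) hf.neg (by simpa using hC)] with x h1 h2
  rw [Metric.tendsto_atTop']
  intro ε hε
  obtain ⟨j, hj⟩ := exists_nat_one_div_lt (show 0 < ε / 2 by linarith)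
  have e : ∀ n, birkhoffAverage ℝ T (fun x => - f x) n x = - birkhoffAverage ℝ T f n x := by
    intro n; simp [birkhoffAverage, birkhoffSum]
  obtain ⟨N, hN⟩ := eventually_atTop.1 ((h1 j).and (h2 j))
  refine ⟨N, fun n hn => ?_⟩
  obtain ⟨h3, h4⟩ := hN n hn.le
  rw [e, integral_neg] at h4
  rw [Real.dist_eq, abs_lt]
  constructor <;> linarith

end Birkhoff

section RandomMaps

variable {S U : Type*} [MeasurableSpace S] [MeasurableSpace U]

/-- Prepend a symbol to a sequence. -/
def consU (q : U × (ℕ → U)) : ℕ → U := fun n => Nat.casesOn n q.1 q.2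

@[simp] lemma consU_zero (q : U × (ℕ → U)) : consU q 0 = q.1 := rfl
@[simp] lemma consU_succ (q : U × (ℕ → U)) (n : ℕ) : consU q (n + 1) = q.2 n := rfl

lemma measurable_consU : Measurable (consU (U := U)) := by
  refine measurable_pi_iff.2 fun n => ?_
  cases n with
  | zero => exact measurable_fst
  | succ n => exact (measurable_pi_apply n).comp measurable_snd

/-- The law of an i.i.d. sequence. -/
abbrev iidLaw (ν : Measure U) [IsProbabilityMeasure ν] : Measure (ℕ → U) :=
  Measure.infinitePi (fun _ : ℕ => ν)

variable {μ : Measure S} {ν : Measure U} [IsProbabilityMeasure μ] [IsProbabilityMeasure ν]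

lemma map_consU : (ν.prod (iidLaw ν)).map consU = iidLaw ν := by
  refine Measure.eq_infinitePi _ fun s t ht => ?_
  rw [Measure.map_apply measurable_consU (MeasurableSet.pi s.countable_toSet fun i _ => ht i)]
  classical
  set t' : ℕ → Set U := fun i => if i ∈ s then t i else Set.univ with ht'
  have ht'm : ∀ i, MeasurableSet (t' i) := fun i => by
    simp only [ht']; split_ifs
    · exact ht i
    · exact MeasurableSet.univ
  obtain ⟨N, hN⟩ : ∃ N, s ⊆ Finset.range (N + 1) := by
    refine ⟨s.sup id, fun i hi => ?_⟩
    exact Finset.mem_range.2 (Nat.lt_succ_of_le (Finset.le_sup (f := id) hi))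
  have h1 : (consU ⁻¹' (Set.pi (s : Set ℕ) t) : Set (U × (ℕ → U))) =
      (t' 0) ×ˢ (Set.pi (Finset.range N : Set ℕ) (fun i => t' (i + 1))) := by
    ext q
    simp only [Set.mem_preimage, Set.mem_pi, Set.mem_prod, Finset.mem_coe]
    constructor
    · intro h
      refine ⟨?_, fun i _ => ?_⟩
      · simp only [ht']; split_ifs with h0
        · exact h 0 h0
        · trivial
      · simp only [ht']; split_ifs with h0
        · exact h (i + 1) h0
        · trivial
    · rintro ⟨h0, h⟩ i hi
      cases i with
      | zero => simp only [ht', hi, if_true] at h0; exact h0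
      | succ i =>
        have : i ∈ Finset.range N := by
          have := Finset.mem_range.1 (hN hi); exact Finset.mem_range.2 (by omega)
        have := h i this
        simp only [ht', hi, if_true] at this; exact this
  rw [h1, Measure.prod_prod, Measure.infinitePi_pi _ (fun i _ => ht'm _)]
  have h2 : ∏ i ∈ s, ν (t i) = ∏ i ∈ Finset.range (N + 1), ν (t' i) := by
    rw [← Finset.prod_subset hN]
    · refine Finset.prod_congr rfl fun i hi => ?_
      simp [ht', hi]
    · intro i _ hi
      simp [ht', hi]
  rw [h2, Finset.prod_range_succ', mul_comm]

/-- The skew product driven by a random map. -/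
def skew (Φ : S → U → S) (q : S × (ℕ → U)) : S × (ℕ → U) := (Φ q.1 (q.2 0), fun n => q.2 (n + 1))

lemma measurable_skew {Φ : S → U → S} (hΦ : Measurable (Function.uncurry Φ)) :
    Measurable (skew Φ) := by
  refine Measurable.prodMk ?_ ?_
  · exact hΦ.comp (measurable_fst.prodMk ((measurable_pi_apply 0).comp measurable_snd))
  · exact measurable_pi_iff.2 fun n => (measurable_pi_apply (n + 1)).comp measurable_snd

lemma measure_iid_cons {D : Set (ℕ → U)} (hD : MeasurableSet D) :
    iidLaw ν D = ∫⁻ v, iidLaw ν {u | consU (v, u) ∈ D} ∂ν := by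
  conv_lhs => rw [← map_consU (ν := ν)]
  rw [Measure.map_apply measurable_consU hD, Measure.prod_apply (measurable_consU hD)]
  rfl

lemma skew_measurePreserving {Φ : S → U → S} (hΦ : Measurable (Function.uncurry Φ))
    (hst : (μ.prod ν).map (Function.uncurry Φ) = μ) :
    MeasurePreserving (skew Φ) (μ.prod (iidLaw ν)) (μ.prod (iidLaw ν)) := by
  refine ⟨measurable_skew hΦ, ?_⟩
  have key : ∀ B : Set S, MeasurableSet B → ∀ D : Set (ℕ → U), MeasurableSet D →
      ((μ.prod (iidLaw ν)).map (skew Φ)) (B ×ˢ D) = μ B * iidLaw ν D := by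
    intro B hB D hD
    rw [Measure.map_apply (measurable_skew hΦ) (hB.prod hD),
      Measure.prod_apply (measurable_skew hΦ (hB.prod hD))]
    have h1 : ∀ s : S, iidLaw ν (Prod.mk s ⁻¹' (skew Φ ⁻¹' B ×ˢ D)) =
        ν {v | Φ s v ∈ B} * iidLaw ν D := by
      intro s
      have hm : MeasurableSet (Prod.mk s ⁻¹' (skew Φ ⁻¹' B ×ˢ D)) :=
        measurable_prodMk_left (measurable_skew hΦ (hB.prod hD))
      rw [measure_iid_cons hm]
      have hvm : MeasurableSet {v | Φ s v ∈ B} := (hΦ.comp measurable_prodMk_left) hB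
      have h2 : ∀ v, iidLaw ν {u | consU (v, u) ∈ Prod.mk s ⁻¹' (skew Φ ⁻¹' B ×ˢ D)} =
          {v | Φ s v ∈ B}.indicator (fun _ => iidLaw ν D) v := by
        intro v
        by_cases hv : Φ s v ∈ B
        · rw [Set.indicator_of_mem (show v ∈ {v | Φ s v ∈ B} from hv)]
          congr 1
          ext u
          simp [skew, hv]
        · rw [Set.indicator_of_notMem (show v ∉ {v | Φ s v ∈ B} from hv)]
          convert measure_empty (μ := iidLaw ν)
          ext u
          simp [skew, hv]
      simp_rw [h2]
      rw [lintegral_indicator hvm, lintegral_const, Measure.restrict_apply_univ, mul_comm]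
    simp_rw [h1]
    rw [lintegral_mul_const]
    · congr 1
      conv_rhs => rw [← hst]
      rw [Measure.map_apply hΦ hB, Measure.prod_apply (hΦ hB)]
      rfl
    · exact measurable_measure_prodMk_left (hΦ hB)
  exact (Measure.prod_eq fun B D hB hD => key B hB D hD).symm

theorem skew_ergodic {Φ : S → U → S} (hΦ : Measurable (Function.uncurry Φ))
    (hst : (μ.prod ν).map (Function.uncurry Φ) = μ)
    (herg : ∀ A : Set S, MeasurableSet A →
      (∀ᵐ q ∂(μ.prod ν), (q.1 ∈ A ↔ Φ q.1 q.2 ∈ A)) → μ A = 0 ∨ μ Aᶜ = 0) :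
    Ergodic (skew Φ) (μ.prod (iidLaw ν)) := by
  have hmp := skew_measurePreserving hΦ hst
  refine { toMeasurePreserving := hmp, aeconst_set := ?_ }
  intro E hE hinv
  have hΦp : MeasurePreserving (Function.uncurry Φ) (μ.prod ν) μ := ⟨hΦ, hst⟩
  have hiff : ∀ s v u, (s, consU (v, u)) ∈ E ↔ (Φ s v, u) ∈ E := by
    intro s v u
    have : (s, consU (v, u)) ∈ skew Φ ⁻¹' E ↔ (s, consU (v, u)) ∈ E := by rw [hinv]
    rw [← this]
    rfl
  -- the section probabilities
  set H : S → ℝ := fun s => (iidLaw ν).real {u | (s, u) ∈ E} with hH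
  have hHe : Measurable (fun s => iidLaw ν {u | (s, u) ∈ E}) := measurable_measure_prodMk_left hE
  have hHm : Measurable H := hHe.ennreal_toReal
  have hH0 : ∀ s, 0 ≤ H s := fun s => measureReal_nonneg
  have hH1 : ∀ s, H s ≤ 1 := fun s => measureReal_le_one
  have hHabs : ∀ s, |H s| ≤ 1 := fun s => by rw [abs_of_nonneg (hH0 s)]; exact hH1 s
  have hharm : ∀ s, ∫ v, H (Φ s v) ∂ν = H s := by
    intro s
    have hsec : MeasurableSet {u | (s, u) ∈ E} := measurable_prodMk_left hE
    simp only [hH, Measure.real]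
    rw [measure_iid_cons hsec, integral_toReal]
    · congr 1
      refine lintegral_congr fun v => ?_
      congr 1
      ext u
      exact (hiff s v u).symm
    · exact (hHe.comp (hΦ.comp measurable_prodMk_left)).aemeasurable
    · exact Filter.Eventually.of_forall fun v => measure_lt_top _ _
  have hHinv : ∀ᵐ q ∂(μ.prod ν), H (Φ q.1 q.2) = H q.1 := by
    have m1 : Measurable (fun q : S × U => H (Φ q.1 q.2)) := hHm.comp hΦ
    have m2 : Measurable (fun q : S × U => H q.1) := hHm.comp measurable_fst
    have i1 : Integrable (fun q : S × U => H (Φ q.1 q.2) ^ 2) (μ.prod ν) :=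
      bdd_integrable (m1.pow_const 2) (C := 1) (fun q => by
        rw [abs_pow]; exact pow_le_one₀ (abs_nonneg _) (hHabs _))
    have i2 : Integrable (fun q : S × U => H q.1 ^ 2) (μ.prod ν) :=
      bdd_integrable (m2.pow_const 2) (C := 1) (fun q => by
        rw [abs_pow]; exact pow_le_one₀ (abs_nonneg _) (hHabs _))
    have i3 : Integrable (fun q : S × U => H q.1 * H (Φ q.1 q.2)) (μ.prod ν) :=
      bdd_integrable (m2.mul m1) (C := 1) (fun q => by
        rw [abs_mul]; exact mul_le_one₀ (hHabs _) (abs_nonneg _) (hHabs _))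
    have e1 : ∫ q, H (Φ q.1 q.2) ^ 2 ∂(μ.prod ν) = ∫ s, H s ^ 2 ∂μ := by
      conv_rhs => rw [← hst]
      rw [integral_map hΦ.aemeasurable (hHm.pow_const 2).aestronglyMeasurable]
      rfl
    have e2 : ∫ q, H q.1 ^ 2 ∂(μ.prod ν) = ∫ s, H s ^ 2 ∂μ := by
      rw [integral_prod _ i2]; simp
    have e3 : ∫ q, H q.1 * H (Φ q.1 q.2) ∂(μ.prod ν) = ∫ s, H s ^ 2 ∂μ := by
      rw [integral_prod _ i3]
      refine integral_congr_ae (Filter.Eventually.of_forall fun s => ?_)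
      simp only
      rw [integral_const_mul, hharm]; ring
    have e4 : ∫ q, (H (Φ q.1 q.2) - H q.1) ^ 2 ∂(μ.prod ν) = 0 := by
      have : ∀ q : S × U, (H (Φ q.1 q.2) - H q.1) ^ 2 =
          H (Φ q.1 q.2) ^ 2 + H q.1 ^ 2 - 2 * (H q.1 * H (Φ q.1 q.2)) := fun q => by ring
      simp_rw [this]
      have i12 : Integrable (fun q : S × U => H (Φ q.1 q.2) ^ 2 + H q.1 ^ 2) (μ.prod ν) := i1.add i2
      rw [integral_sub i12 (i3.const_mul 2), integral_add i1 i2, integral_const_mul,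
        e1, e2, e3]; ring
    have i4 : Integrable (fun q : S × U => (H (Φ q.1 q.2) - H q.1) ^ 2) (μ.prod ν) := by
      refine bdd_integrable ((m1.sub m2).pow_const 2) (C := 4) (fun q => ?_)
      have a1 := hH0 q.1; have a2 := hH1 q.1
      have a3 := hH0 (Φ q.1 q.2); have a4 := hH1 (Φ q.1 q.2)
      rw [abs_of_nonneg (sq_nonneg _)]
      nlinarith
    rw [integral_eq_zero_iff_of_nonneg (fun q => sq_nonneg _) i4] at e4
    filter_upwards [e4] with q hq
    have : (H (Φ q.1 q.2) - H q.1) ^ 2 = 0 := hq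
    linarith [pow_eq_zero_iff (two_ne_zero) |>.1 this]
  obtain ⟨c, hc⟩ : ∃ c : ℝ, H =ᵐ[μ] fun _ => c := by
    have := exists_eventuallyEq_const_of_forall_separating (l := ae μ) (f := H) MeasurableSet
      (fun V hV => by
        have hA : MeasurableSet (H ⁻¹' V) := hHm hV
        have := herg (H ⁻¹' V) hA (by
          filter_upwards [hHinv] with q hq
          simp [hq])
        rcases this with h | h
        · right; rw [ae_iff]; simp only [not_not]; exact h
        · left; rw [ae_iff]; exact h)
    exact this
  have hc0 : 0 ≤ c := by
    obtain ⟨s, hs⟩ := hc.exists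
    have hs' : H s = c := hs
    rw [← hs']; exact hH0 s
  have hce : ∀ᵐ s ∂μ, iidLaw ν {u | (s, u) ∈ E} = ENNReal.ofReal c := by
    filter_upwards [hc] with s hs
    rw [← hs, hH, ofReal_measureReal]
  -- independence of cylinders
  have hcyl : ∀ (n : ℕ) (t : ℕ → Set U), (∀ i, MeasurableSet (t i)) →
      ∀ᵐ s ∂μ, iidLaw ν {u | (s, u) ∈ E ∧ ∀ i < n, u i ∈ t i} =
        ENNReal.ofReal c * ∏ i ∈ Finset.range n, ν (t i) := by
    intro n
    induction n with
    | zero => intro t ht; simpa using hce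
    | succ n ih =>
      intro t ht
      have h1 := hΦp.quasiMeasurePreserving.ae (ih (fun i => t (i + 1)) (fun i => ht _))
      have h2 := Measure.ae_ae_of_ae_prod h1
      filter_upwards [h2] with s hs
      have hbox : MeasurableSet {u : ℕ → U | ∀ i < n + 1, u i ∈ t i} := by
        have : {u : ℕ → U | ∀ i < n + 1, u i ∈ t i} = ⋂ i : ℕ, ⋂ _ : i < n + 1, {u | u i ∈ t i} := by
          ext; simp
        rw [this]
        exact MeasurableSet.iInter fun i => MeasurableSet.iInter fun _ => measurable_pi_apply i (ht i)
      have hm : MeasurableSet {u | (s, u) ∈ E ∧ ∀ i < n + 1, u i ∈ t i} :=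
        MeasurableSet.inter (measurable_prodMk_left hE) hbox
      rw [measure_iid_cons hm]
      have h3 : ∀ᵐ v ∂ν, iidLaw ν {u | consU (v, u) ∈
            {u | (s, u) ∈ E ∧ ∀ i < n + 1, u i ∈ t i}} =
          (t 0).indicator (fun _ => ENNReal.ofReal c * ∏ i ∈ Finset.range n, ν (t (i + 1))) v := by
        filter_upwards [hs] with v hv
        by_cases h0 : v ∈ t 0
        · rw [Set.indicator_of_mem h0, ← hv]
          congr 1
          ext u
          simp only [Set.mem_setOf_eq, hiff, Function.uncurry_apply_pair]
          refine and_congr Iff.rfl ?_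
          constructor
          · intro h i hi
            exact h (i + 1) (by omega)
          · intro h i hi
            cases i with
            | zero => exact h0
            | succ i => exact h i (by omega)
        · rw [Set.indicator_of_notMem h0]
          convert measure_empty (μ := iidLaw ν)
          ext u
          simp only [Set.mem_setOf_eq, Set.mem_empty_iff_false, iff_false, not_and]
          intro _ h
          exact h0 (h 0 (by omega))
      rw [lintegral_congr_ae h3, lintegral_indicator (ht 0), lintegral_const,
        Measure.restrict_apply_univ, Finset.prod_range_succ']
      ring
  have hrect : (μ.prod (iidLaw ν)).restrict E = ENNReal.ofReal c • (μ.prod (iidLaw ν)) := by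
    refine ext_of_generate_finite
      (Set.image2 (· ×ˢ ·) {B : Set S | MeasurableSet B}
        (squareCylinders (fun _ : ℕ => {D : Set U | MeasurableSet D}))) ?_ ?_ ?_ ?_
    · refine (generateFrom_eq_prod MeasurableSpace.generateFrom_measurableSet ?_ ?_ ?_).symm
      · exact generateFrom_squareCylinders
      · exact isCountablySpanning_measurableSet
      · refine ⟨fun _ => Set.univ, fun _ => ⟨∅, fun _ => Set.univ, by simp, by simp⟩, Set.iUnion_const _⟩
    · exact MeasurableSpace.isPiSystem_measurableSet.prod
        (isPiSystem_squareCylinders (fun _ => MeasurableSpace.isPiSystem_measurableSet)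
          (fun _ => MeasurableSet.univ))
    · rintro _ ⟨B, hB, D, ⟨s, t, ht, rfl⟩, rfl⟩
      have ht' : ∀ i, MeasurableSet (t i) := fun i => by simpa using ht i (Set.mem_univ i)
      classical
      set t' : ℕ → Set U := fun i => if i ∈ s then t i else Set.univ with ht'd
      have ht'm : ∀ i, MeasurableSet (t' i) := fun i => by
        simp only [ht'd]; split_ifs
        · exact ht' i
        · exact MeasurableSet.univ
      obtain ⟨N, hN⟩ : ∃ N, s ⊆ Finset.range (N + 1) := by
        refine ⟨s.sup id, fun i hi => ?_⟩
        exact Finset.mem_range.2 (Nat.lt_succ_of_le (Finset.le_sup (f := id) hi))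
      have hpi : (Set.pi (s : Set ℕ) t) = {u | ∀ i < N + 1, u i ∈ t' i} := by
        ext u
        simp only [Set.mem_pi, Set.mem_setOf_eq, Finset.mem_coe]
        constructor
        · intro h i _
          simp only [ht'd]; split_ifs with h0
          · exact h i h0
          · trivial
        · intro h i hi
          have := h i (Finset.mem_range.1 (hN hi))
          simp only [ht'd, hi, if_true] at this; exact this
      have hpim : MeasurableSet (Set.pi (s : Set ℕ) t) :=
        MeasurableSet.pi s.countable_toSet fun i _ => ht' i
      have hpv : iidLaw ν (Set.pi (s : Set ℕ) t) = ∏ i ∈ Finset.range (N + 1), ν (t' i) := by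
        rw [Measure.infinitePi_pi _ (fun i _ => ht' i), ← Finset.prod_subset hN]
        · refine Finset.prod_congr rfl fun i hi => ?_
          simp [ht'd, hi]
        · intro i _ hi
          simp [ht'd, hi]
      have hBm : MeasurableSet B := hB
      simp only
      rw [Measure.restrict_apply (hBm.prod hpim), Measure.smul_apply, Measure.prod_prod, hpv,
        Measure.prod_apply ((hBm.prod hpim).inter hE)]
      have h4 : ∀ᵐ a ∂μ, iidLaw ν (Prod.mk a ⁻¹' (B ×ˢ (Set.pi (s : Set ℕ) t) ∩ E)) =
          B.indicator (fun _ => ENNReal.ofReal c * ∏ i ∈ Finset.range (N + 1), ν (t' i)) a := by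
        filter_upwards [hcyl (N + 1) t' ht'm] with a ha
        by_cases hb : a ∈ B
        · rw [Set.indicator_of_mem hb, ← ha]
          congr 1
          rw [hpi]
          ext u
          simp [hb, and_comm]
        · rw [Set.indicator_of_notMem hb]
          convert measure_empty (μ := iidLaw ν)
          ext u
          simp [hb]
      rw [lintegral_congr_ae h4, lintegral_indicator hBm, lintegral_const,
        Measure.restrict_apply_univ, smul_eq_mul]
      ring
    · rw [Measure.restrict_apply_univ, Measure.smul_apply, measure_univ, smul_eq_mul, mul_one,
        Measure.prod_apply hE]
      refine (lintegral_congr_ae hce).trans ?_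
      simp
  have hPE : (μ.prod (iidLaw ν)) E = ENNReal.ofReal c := by
    rw [← Measure.restrict_apply_univ, hrect]; simp
  have hPE2 : (μ.prod (iidLaw ν)) E = (μ.prod (iidLaw ν)) E * (μ.prod (iidLaw ν)) E := by
    conv_lhs => rw [← Measure.restrict_apply_self, hrect]
    rw [Measure.smul_apply, smul_eq_mul, hPE]
  rw [eventuallyConst_set']
  have hne : (μ.prod (iidLaw ν)) E ≠ ∞ := measure_ne_top _ _
  by_cases hz : (μ.prod (iidLaw ν)) E = 0
  · left; exact ae_eq_empty.2 hz
  · right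
    have : (μ.prod (iidLaw ν)) E = 1 := by
      have h := hPE2
      nth_rewrite 1 [← one_mul ((μ.prod (iidLaw ν)) E)] at h
      exact ((ENNReal.mul_left_inj hz hne).1 h).symm
    exact eventuallyEq_univ.2 ((prob_compl_eq_zero_iff hE).2 this)

end RandomMaps

section Bernoulli

variable {d : ℕ} {q : ℝ}

/-- The cylinder with prescribed states on a finite set of edges. -/
def cyl (F : Finset (EdgeIx d)) (a : Config d) : Set (Config d) := {ω | ∀ b ∈ F, ω b = a b}

lemma measurableSet_cyl (F : Finset (EdgeIx d)) (a : Config d) : MeasurableSet (cyl F a) := by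
  have : cyl F a = ⋂ b ∈ F, (fun ω : Config d => ω b) ⁻¹' {a b} := by
    ext ω; simp [cyl]
  rw [this]
  exact Finset.measurableSet_biInter _ fun b _ => measurable_pi_apply b (measurableSet_singleton _)

lemma isPiSystem_cyl : IsPiSystem {S : Set (Config d) | ∃ F a, S = cyl F a} := by
  classical
  rintro _ ⟨F, a, rfl⟩ _ ⟨F', a', rfl⟩ ⟨ω, h1, h2⟩
  refine ⟨F ∪ F', ω, ?_⟩
  ext η
  simp only [cyl, Set.mem_inter_iff, Set.mem_setOf_eq, Finset.mem_union] at *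
  constructor
  · rintro ⟨h3, h4⟩ b (hb | hb)
    · rw [h3 b hb, h1 b hb]
    · rw [h4 b hb, h2 b hb]
  · intro h
    exact ⟨fun b hb => by rw [h b (Or.inl hb), h1 b hb],
      fun b hb => by rw [h b (Or.inr hb), h2 b hb]⟩

lemma generateFrom_cyl : (inferInstance : MeasurableSpace (Config d)) =
    MeasurableSpace.generateFrom {S : Set (Config d) | ∃ F a, S = cyl F a} := by
  apply le_antisymm
  · change MeasurableSpace.pi ≤ _
    refine iSup_le fun b => ?_
    rw [MeasurableSpace.comap_le_iff_le_map]
    intro s _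
    change MeasurableSet[MeasurableSpace.generateFrom _] ((fun ω : Config d => ω b) ⁻¹' s)
    have hs : (fun ω : Config d => ω b) ⁻¹' s = ⋃ v ∈ s, cyl {b} (fun _ => v) := by
      ext ω; simp [cyl]
    rw [hs]
    refine MeasurableSet.biUnion (Set.to_countable s) fun v _ => ?_
    exact MeasurableSpace.measurableSet_generateFrom ⟨_, _, rfl⟩
  · refine MeasurableSpace.generateFrom_le ?_
    rintro _ ⟨F, a, rfl⟩
    exact measurableSet_cyl F a

lemma bernoulli_unique {P Q : Measure (Config d)} (hP : IsBernoulli d q P)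
    (hQ : IsBernoulli d q Q) : P = Q := by
  haveI := hP.1
  haveI := hQ.1
  refine ext_of_generate_finite _ generateFrom_cyl isPiSystem_cyl ?_ (by simp)
  rintro _ ⟨F, a, rfl⟩
  rw [cyl, hP.2, hQ.2]

lemma measurable_shift (x : V d) : Measurable (shift x : Config d → Config d) :=
  measurable_pi_iff.2 fun b => measurable_pi_apply _

lemma map_shift {P : Measure (Config d)} (hP : IsBernoulli d q P) (x : V d) :
    P.map (shift x) = P := by
  haveI := hP.1
  refine bernoulli_unique (q := q) ⟨Measure.isProbabilityMeasure_map
    (measurable_shift x).aemeasurable, ?_⟩ hP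
  intro F a
  have hm := measurableSet_cyl F a
  change P.map (shift x) (cyl F a) = _
  rw [Measure.map_apply (measurable_shift x) hm]
  let e : EdgeIx d ≃ EdgeIx d :=
    { toFun := fun b => (b.1 + x, b.2)
      invFun := fun b => (b.1 - x, b.2)
      left_inv := fun b => by simp
      right_inv := fun b => by simp }
  have h1 : shift x ⁻¹' cyl F a = {ω | ∀ b ∈ F.map e.toEmbedding, ω b = a (e.symm b)} := by
    ext ω
    simp only [cyl, Set.mem_preimage, Set.mem_setOf_eq, Finset.mem_map, forall_exists_index,
      and_imp, forall_apply_eq_imp_iff₂]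
    simp only [Equiv.coe_toEmbedding, Equiv.symm_apply_apply]
    rfl
  rw [h1, hP.2, Finset.prod_map]
  simp

lemma shift_measurePreserving {P : Measure (Config d)} (hP : IsBernoulli d q P) (x : V d) :
    MeasurePreserving (shift x) P P := ⟨measurable_shift x, map_shift hP x⟩

lemma measure_shift_preimage {P : Measure (Config d)} (hP : IsBernoulli d q P) (x : V d)
    {A : Set (Config d)} (hA : MeasurableSet A) : P (shift x ⁻¹' A) = P A :=
  (shift_measurePreserving hP x).measure_preimage hA.nullMeasurableSet

/-- Set the state of one edge. -/
def setEdge (b : EdgeIx d) (v : Bool) (ω : Config d) : Config d := Function.update ω b v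

lemma measurable_setEdge (b : EdgeIx d) (v : Bool) : Measurable (setEdge b v) :=
  measurable_update_left

lemma resample {P : Measure (Config d)} (h0 : 0 ≤ q) (h1 : q ≤ 1) (hP : IsBernoulli d q P)
    (b : EdgeIx d) :
    ENNReal.ofReal q • P.map (setEdge b true) + ENNReal.ofReal (1 - q) • P.map (setEdge b false)
      = P := by
  classical
  haveI := hP.1
  have hm := fun v => measurable_setEdge (d := d) b v
  have hsum : ENNReal.ofReal q + ENNReal.ofReal (1 - q) = 1 := by
    rw [← ENNReal.ofReal_add h0 (by linarith)]; simp
  refine bernoulli_unique (q := q) ⟨⟨?_⟩, ?_⟩ hP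
  · simp [Measure.map_apply (hm _) MeasurableSet.univ, hsum]
  intro F a
  change (ENNReal.ofReal q • P.map (setEdge b true) +
    ENNReal.ofReal (1 - q) • P.map (setEdge b false)) (cyl F a) = _
  rw [Measure.add_apply, Measure.smul_apply, Measure.smul_apply,
    Measure.map_apply (hm _) (measurableSet_cyl F a),
    Measure.map_apply (hm _) (measurableSet_cyl F a), smul_eq_mul, smul_eq_mul]
  by_cases hb : b ∈ F
  · have key : ∀ v, setEdge b v ⁻¹' cyl F a = if a b = v then cyl (F.erase b) a else ∅ := by
      intro v
      ext ω
      split_ifs with h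
      · simp only [cyl, setEdge, Set.mem_preimage, Set.mem_setOf_eq, Finset.mem_erase]
        constructor
        · rintro h2 c ⟨hc, hcF⟩
          have := h2 c hcF
          rwa [Function.update_of_ne hc] at this
        · intro h2 c hc
          by_cases hcb : c = b
          · subst hcb; simp [h]
          · rw [Function.update_of_ne hcb]; exact h2 c ⟨hcb, hc⟩
      · simp only [cyl, setEdge, Set.mem_preimage, Set.mem_setOf_eq, Set.mem_empty_iff_false,
          iff_false]
        intro h2
        have := h2 b hb
        simp at this
        exact h this.symm
    have hc : P (cyl (F.erase b) a) = _ := hP.2 (F.erase b) a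
    rw [key, key, ← Finset.mul_prod_erase F _ hb, ← hc]
    cases hab : a b <;> simp
  · have key : ∀ v, setEdge b v ⁻¹' cyl F a = cyl F a := by
      intro v
      ext ω
      simp only [cyl, setEdge, Set.mem_preimage, Set.mem_setOf_eq]
      refine forall₂_congr fun c hc => ?_
      rw [Function.update_of_ne]
      rintro rfl; exact hb hc
    rw [key, key, ← add_mul, hsum, one_mul, cyl, hP.2]

lemma setEdge_null {P : Measure (Config d)} (h0 : 0 < q) (h1 : q ≤ 1) (hP : IsBernoulli d q P)
    (b : EdgeIx d) {B : Set (Config d)} (hB : P B = 0) : P (setEdge b true ⁻¹' B) = 0 := by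
  have hres := resample h0.le h1 hP b
  obtain ⟨B', hBB', hB'm, hB'0⟩ := exists_measurable_superset_of_null hB
  refine measure_mono_null (Set.preimage_mono hBB') ?_
  rw [← hres] at hB'0
  rw [Measure.add_apply, Measure.smul_apply, add_eq_zero, smul_eq_mul, mul_eq_zero,
    Measure.map_apply (measurable_setEdge b true) hB'm] at hB'0
  rcases hB'0.1 with h | h
  · exact absurd h (by simpa using h0)
  · exact h

/-- Open all the edges of a finite set. -/
def openEdges (D : Finset (EdgeIx d)) (ω : Config d) : Config d :=
  fun b => if b ∈ D then true else ω b

lemma openEdges_null {P : Measure (Config d)} (h0 : 0 < q) (h1 : q ≤ 1) (hP : IsBernoulli d q P)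
    (D : Finset (EdgeIx d)) :
    ∀ {B : Set (Config d)}, P B = 0 → P (openEdges D ⁻¹' B) = 0 := by
  classical
  induction D using Finset.induction_on with
  | empty =>
    intro B hB
    have : openEdges (∅ : Finset (EdgeIx d)) ⁻¹' B = B := by
      have h : openEdges (∅ : Finset (EdgeIx d)) = id := by
        funext ω b; simp [openEdges]
      rw [h]; rfl
    rwa [this]
  | insert b D hb ih =>
    intro B hB
    have : openEdges (insert b D) ⁻¹' B = openEdges D ⁻¹' (setEdge b true ⁻¹' B) := by
      ext ω
      simp only [Set.mem_preimage]
      have : openEdges (insert b D) ω = setEdge b true (openEdges D ω) := by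
        funext c
        by_cases hc : c = b
        · subst hc; simp [openEdges, setEdge]
        · simp [openEdges, setEdge, Function.update_of_ne hc, hc]
      rw [this]
    rw [this]
    exact ih (setEdge_null h0 h1 hP b hB)

lemma bernoulli_iIndepFun {P : Measure (Config d)} (h0 : 0 ≤ q) (h1 : q ≤ 1)
    (hP : IsBernoulli d q P) : iIndepFun (fun (b : EdgeIx d) (ω : Config d) => ω b) P := by
  let m : Measure Bool := ENNReal.ofReal q • Measure.dirac true +
    ENNReal.ofReal (1 - q) • Measure.dirac false
  haveI : IsProbabilityMeasure m := ⟨by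
    simp only [m, Measure.add_apply, Measure.smul_apply, measure_univ, smul_eq_mul, mul_one]
    rw [← ENNReal.ofReal_add h0 (by linarith)]; simp⟩
  have : P = Measure.infinitePi (fun _ : EdgeIx d => m) := by
    refine bernoulli_unique hP ⟨inferInstance, fun F a => ?_⟩
    have : {ω : Config d | ∀ b ∈ F, ω b = a b} = Set.pi (F : Set (EdgeIx d)) fun b => {a b} := by
      ext; simp [Set.mem_pi]
    rw [this, Measure.infinitePi_pi _ (fun i _ => measurableSet_singleton _)]
    refine Finset.prod_congr rfl fun b _ => ?_
    cases h : a b <;> simp [m]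
  rw [this]
  exact iIndepFun_infinitePi (X := fun _ ω => ω) (fun _ => measurable_id)

open scoped symmDiff in
theorem bernoulli_ergodic {P : Measure (Config d)} (hd : 0 < d) (h0 : 0 ≤ q) (h1 : q ≤ 1)
    (hP : IsBernoulli d q P) {A : Set (Config d)} (hA : MeasurableSet A)
    (hinv : ∀ x : V d, shift x ⁻¹' A = A) : P A = 0 ∨ P A = 1 := by
  classical
  haveI := hP.1
  have key : ∀ ε : ℝ, 0 < ε → |P.real A - P.real A * P.real A| ≤ 4 * ε := by
    intro ε hε
    obtain ⟨C, hC, hCA⟩ := exists_measure_symmDiff_lt_of_generateFrom_isSetRing (μ := P)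
      (C := measurableCylinders (fun _ : EdgeIx d => Bool)) (isSetRing_measurableCylinders (α := fun _ : EdgeIx d => Bool))
      ⟨{Set.univ}, Set.countable_singleton _, by
        simpa using univ_mem_measurableCylinders (fun _ : EdgeIx d => Bool), by simp⟩
      generateFrom_measurableCylinders.symm hA (ENNReal.ofReal_pos.2 hε)
    have hCm := MeasurableSet.of_mem_measurableCylinders hC
    have hCA' : P.real (C ∆ A) ≤ ε := ENNReal.toReal_le_of_le_ofReal hε.le hCA.le
    obtain ⟨F, S, hS, rfl⟩ := (mem_measurableCylinders _).1 hC
    set i0 : Fin d := ⟨0, hd⟩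
    -- a large shift
    obtain ⟨N, hN⟩ : ∃ N : ℤ, ∀ b ∈ F, ∀ c ∈ F, c.1 i0 - b.1 i0 < N := by
      obtain ⟨N, hN⟩ := ((F ×ˢ F).image fun r => r.2.1 i0 - r.1.1 i0).bddAbove
      refine ⟨N + 1, fun b hb c hc => ?_⟩
      have := hN (Finset.mem_coe.2 (Finset.mem_image.2 ⟨(b, c), by simp [hb, hc], rfl⟩))
      simp only at this; omega
    let x : V d := fun _ => N
    let e : EdgeIx d → EdgeIx d := fun b => (b.1 + x, b.2)
    let T : Finset (EdgeIx d) := F.image e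
    have hdisj : Disjoint F T := by
      rw [Finset.disjoint_left]
      intro c hc hcT
      obtain ⟨b, hb, rfl⟩ := Finset.mem_image.1 hcT
      have := hN b hb _ hc
      simp [e, x] at this
    have hind := (bernoulli_iIndepFun h0 h1 hP).indepFun_finset F T hdisj
      (fun b => measurable_pi_apply b)
    let ψ : (T → Bool) → (F → Bool) := fun g b => g ⟨e b, Finset.mem_image_of_mem e b.2⟩
    have hψ : Measurable ψ := measurable_pi_iff.2 fun b => measurable_pi_apply _
    have hprod := hind.measure_inter_preimage_eq_mul S (ψ ⁻¹' S) hS (hψ hS)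
    have hC2 : P (cylinder (α := fun _ : EdgeIx d => Bool) F S ∩ shift x ⁻¹' cylinder (α := fun _ : EdgeIx d => Bool) F S) =
        P (cylinder (α := fun _ : EdgeIx d => Bool) F S) * P (cylinder (α := fun _ : EdgeIx d => Bool) F S) := by
      conv_rhs => rw [← measure_shift_preimage hP x hCm]
      rw [measure_shift_preimage hP x hCm]
      have h2 : P (cylinder (α := fun _ : EdgeIx d => Bool) F S) * P (shift x ⁻¹' cylinder (α := fun _ : EdgeIx d => Bool) F S) =
        P (cylinder (α := fun _ : EdgeIx d => Bool) F S ∩ shift x ⁻¹' cylinder (α := fun _ : EdgeIx d => Bool) F S) := hprod.symm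
      rw [← h2, measure_shift_preimage hP x hCm]
    set C := cylinder (α := fun _ : EdgeIx d => Bool) F S
    have hsm : P.real ((shift x ⁻¹' C) ∆ A) ≤ ε := by
      have : (shift x ⁻¹' C) ∆ A = shift x ⁻¹' (C ∆ A) := by
        rw [Set.preimage_symmDiff, hinv]
      rw [this, Measure.real, measure_shift_preimage hP x (hCm.symmDiff hA)]
      exact hCA'
    have hCTm : MeasurableSet (shift x ⁻¹' C) := measurable_shift x hCm
    have hsub : (C ∩ shift x ⁻¹' C) ∆ A ⊆ (C ∆ A) ∪ ((shift x ⁻¹' C) ∆ A) := by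
      intro ω
      simp only [Set.mem_symmDiff, Set.mem_inter_iff, Set.mem_union]
      tauto
    have e1 : |P.real (C ∩ shift x ⁻¹' C) - P.real A| ≤ 2 * ε := by
      refine (abs_measureReal_sub_le_measureReal_symmDiff
        (hCm.inter hCTm).nullMeasurableSet hA.nullMeasurableSet).trans ?_
      have := (measureReal_mono hsub (μ := P)).trans (measureReal_union_le _ _)
      linarith
    have e2 : |P.real C - P.real A| ≤ ε :=
      (abs_measureReal_sub_le_measureReal_symmDiff hCm.nullMeasurableSet
        hA.nullMeasurableSet).trans hCA'
    have e3 : P.real (C ∩ shift x ⁻¹' C) = P.real C * P.real C := by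
      simp only [Measure.real]; rw [hC2, ENNReal.toReal_mul]
    rw [e3] at e1
    have c0 : 0 ≤ P.real C := measureReal_nonneg
    have c1 : P.real C ≤ 1 := measureReal_le_one
    have a0 : 0 ≤ P.real A := measureReal_nonneg
    have a1 : P.real A ≤ 1 := measureReal_le_one
    rw [abs_le] at *
    constructor <;> nlinarith
  have hz : |P.real A - P.real A * P.real A| = 0 := by
    refine le_antisymm (le_of_forall_pos_le_add fun ε hε => ?_) (abs_nonneg _)
    have := key (ε / 4) (by positivity)
    linarith
  have hz' : P.real A * (1 - P.real A) = 0 := by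
    have := abs_eq_zero.1 hz; linarith
  rcases mul_eq_zero.1 hz' with h | h
  · left
    rwa [measureReal_eq_zero_iff] at h
  · right
    have h' : (P A).toReal = 1 := by change P.real A = 1; linarith
    rwa [ENNReal.toReal_eq_one_iff] at h'

end Bernoulli

section Trifurcation

variable {W ι : Type*}

/-- Edges of `G` with both end points in `B`. -/
def insideG (G : SimpleGraph W) (B : Set W) : SimpleGraph W where
  Adj x y := G.Adj x y ∧ x ∈ B ∧ y ∈ B
  symm.symm := fun _ _ h => ⟨h.1.symm, h.2.2, h.2.1⟩
  loopless.irrefl := fun x h => G.loopless.irrefl x h.1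

/-- The graph `G` with all edges inside `B` removed. -/
def outsideG (G : SimpleGraph W) (B : Set W) : SimpleGraph W where
  Adj x y := G.Adj x y ∧ ¬ (x ∈ B ∧ y ∈ B)
  symm.symm := fun _ _ h => ⟨h.1.symm, fun h' => h.2 ⟨h'.2, h'.1⟩⟩
  loopless.irrefl := fun x h => G.loopless.irrefl x h.1

lemma reach_induct {G : SimpleGraph W} {x y : W} (h : G.Reachable x y) {p : W → Prop}
    (h0 : p y) (hs : ∀ a b, G.Adj a b → G.Reachable b y → p b → p a) : p x := by
  rw [SimpleGraph.reachable_iff_reflTransGen] at h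
  induction h using Relation.ReflTransGen.head_induction_on with
  | refl => exact h0
  | head hab hbc ih =>
    exact hs _ _ hab ((SimpleGraph.reachable_iff_reflTransGen _ _).2 hbc) ih

lemma inside_le_outside {G : SimpleGraph W} {B B' : Set W} (h : Disjoint B B') :
    insideG G B ≤ outsideG G B' := by
  intro x y hxy
  exact ⟨hxy.1, fun h' => Set.disjoint_left.1 h hxy.2.1 h'.1⟩

lemma transfer {G : SimpleGraph W} {B B' : Set W} {x y : W}
    (h : (outsideG G B).Reachable x y) (hno : ∀ c ∈ B', ¬ (outsideG G B).Reachable x c) :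
    (outsideG G B').Reachable x y := by
  refine reach_induct (p := fun z => (outsideG G B).Reachable x z →
    (outsideG G B').Reachable z y) h (fun _ => SimpleGraph.Reachable.refl _) ?_
    (SimpleGraph.Reachable.refl _)
  intro a b hab _ ih hxa
  have : (outsideG G B').Adj a b := ⟨hab.1, fun h' => hno a h'.1 hxa⟩
  exact this.reachable.trans (ih (hxa.trans hab.reachable))

lemma firstHit {G : SimpleGraph W} {B B' : Set W} {x c : W}
    (h : (outsideG G B).Reachable x c) (hc : c ∈ B') :
    ∃ c' ∈ B', (outsideG G B').Reachable x c' := by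
  refine reach_induct (p := fun z => ∃ c' ∈ B', (outsideG G B').Reachable z c') h
    ⟨c, hc, SimpleGraph.Reachable.refl _⟩ ?_
  rintro a b hab _ ⟨c', hc', hb⟩
  by_cases ha : a ∈ B'
  · exact ⟨a, ha, SimpleGraph.Reachable.refl _⟩
  · have : (outsideG G B').Adj a b := ⟨hab.1, fun h' => ha h'.1⟩
    exact ⟨c', hc', this.reachable.trans hb⟩

/-- The Burton–Keane counting lemma. -/
theorem trifurcation_count [DecidableEq ι] (G : SimpleGraph W) (B : ι → Set W) (a : ι → Fin 3 → W)
    (S : Finset ι)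
    (hdisj : ∀ s ∈ S, ∀ t ∈ S, s ≠ t → Disjoint (B s) (B t))
    (hconn : ∀ t ∈ S, ∀ x ∈ B t, ∀ y ∈ B t, (insideG G (B t)).Reachable x y)
    (haB : ∀ t ∈ S, ∀ i, a t i ∈ B t)
    (hsep : ∀ t ∈ S, ∀ i j, i ≠ j → ¬ (outsideG G (B t)).Reachable (a t i) (a t j)) :
    ∀ (Y : Finset W),
      (∀ t ∈ S, ∀ i, ∃ y ∈ Y, (outsideG G (B t)).Reachable (a t i) y) → S.card ≤ Y.card := by
  classical
  induction hn : S.card generalizing S with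
  | zero => intro Y _; exact Nat.zero_le _
  | succ n ih =>
    intro Y hY
    -- choose the maximiser
    let N : ι → W → ℕ := fun t b =>
      (S.filter fun s => s ≠ t ∧ ∃ c ∈ B s, (outsideG G (B t)).Reachable b c).card
    have hSne : S.Nonempty := Finset.card_pos.1 (by omega)
    have hmax : ∃ t ∈ S, ∃ b ∈ B t, ∀ s ∈ S, ∀ c ∈ B s, N s c ≤ N t b := by
      let Z : Set ℕ := {k | ∃ t ∈ S, ∃ b ∈ B t, N t b = k}
      have hZne : Z.Nonempty := by
        obtain ⟨t, ht⟩ := hSne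
        exact ⟨_, t, ht, a t 0, haB t ht 0, rfl⟩
      have hZb : BddAbove Z := by
        refine ⟨S.card, ?_⟩
        rintro _ ⟨t, _, b, _, rfl⟩
        exact Finset.card_filter_le _ _
      obtain ⟨t, ht, b, hb, hk⟩ := Nat.sSup_mem hZne hZb
      refine ⟨t, ht, b, hb, fun s hs c hc => ?_⟩
      rw [hk]
      exact le_csSup hZb ⟨s, hs, c, hc, rfl⟩
    obtain ⟨t, ht, b, hb, hmx⟩ := hmax
    have hclaim : ∀ b' ∈ B t, ¬ (outsideG G (B t)).Reachable b b' → ∀ s ∈ S, s ≠ t →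
        ∀ c ∈ B s, ¬ (outsideG G (B t)).Reachable b' c := by
      intro b' hb' hbb' s hs hst c hc hreach
      obtain ⟨c', hc', hr'⟩ := firstHit (B' := B s) hreach hc
      have hnobs : ∀ z ∈ B s, ¬ (outsideG G (B t)).Reachable b z := by
        intro z hz hbz
        apply hbb'
        have h1 := (hconn s hs z hz c hc).mono (inside_le_outside (hdisj s hs t ht hst))
        exact hbz.trans (h1.trans hreach.symm)
      have hcb : (outsideG G (B s)).Reachable c' b :=
        hr'.symm.trans ((hconn t ht b' hb' b hb).mono
          (inside_le_outside (hdisj t ht s hs hst.symm)))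
      have hlt : N t b < N s c' := by
        refine Finset.card_lt_card ?_
        rw [Finset.ssubset_iff_of_subset]
        · refine ⟨t, ?_, by simp⟩
          simp only [Finset.mem_filter]
          exact ⟨ht, hst.symm, b, hb, hcb⟩
        · intro r hr
          simp only [Finset.mem_filter] at hr ⊢
          obtain ⟨hrS, hrt, z, hz, hbz⟩ := hr
          refine ⟨hrS, ?_, z, hz, hcb.trans (transfer hbz hnobs)⟩
          rintro rfl
          exact hnobs z hz hbz
      exact absurd (hmx s hs c' hc') (not_le.2 hlt)
    -- two branches not containing b
    obtain ⟨i, j, hij, hi, hj⟩ : ∃ i j, i ≠ j ∧ ¬ (outsideG G (B t)).Reachable b (a t i) ∧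
        ¬ (outsideG G (B t)).Reachable b (a t j) := by
      by_cases h0 : (outsideG G (B t)).Reachable b (a t 0)
      · exact ⟨1, 2, by decide, fun h => hsep t ht 0 1 (by decide) (h0.symm.trans h),
          fun h => hsep t ht 0 2 (by decide) (h0.symm.trans h)⟩
      · by_cases h1 : (outsideG G (B t)).Reachable b (a t 1)
        · exact ⟨0, 2, by decide, h0, fun h => hsep t ht 1 2 (by decide) (h1.symm.trans h)⟩
        · exact ⟨0, 1, by decide, h0, h1⟩
    have hci := hclaim _ (haB t ht i) hi
    have hcj := hclaim _ (haB t ht j) hj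
    let Y' := Y.filter fun y => ¬ (outsideG G (B t)).Reachable (a t i) y
    have hY' : Y'.card < Y.card := by
      refine Finset.card_lt_card ?_
      rw [Finset.ssubset_iff_of_subset (Finset.filter_subset _ _)]
      obtain ⟨y, hy, hr⟩ := hY t ht i
      exact ⟨y, hy, by simp [Y', hr]⟩
    have := ih (S.erase t) (fun s hs r hr => hdisj s (Finset.mem_of_mem_erase hs) r
        (Finset.mem_of_mem_erase hr)) (fun s hs => hconn s (Finset.mem_of_mem_erase hs))
      (fun s hs => haB s (Finset.mem_of_mem_erase hs))
      (fun s hs => hsep s (Finset.mem_of_mem_erase hs))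
      (by rw [Finset.card_erase_of_mem ht]; omega) Y' ?_
    · omega
    · intro s hs k
      have hsS := Finset.mem_of_mem_erase hs
      have hst := Finset.ne_of_mem_erase hs
      obtain ⟨y, hy, hr⟩ := hY s hsS k
      by_cases hyi : (outsideG G (B t)).Reachable (a t i) y
      · obtain ⟨y', hy', hr'⟩ := hY t ht j
        refine ⟨y', ?_, ?_⟩
        · simp only [Y', Finset.mem_filter]
          exact ⟨hy', fun h => hsep t ht i j hij (h.trans hr'.symm)⟩
        · have h1 : (outsideG G (B s)).Reachable (a t i) y := transfer hyi (hci s hsS hst)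
          have h2 : (outsideG G (B s)).Reachable (a t j) y' := transfer hr' (hcj s hsS hst)
          have h3 : (outsideG G (B s)).Reachable (a t i) (a t j) :=
            (hconn t ht _ (haB t ht i) _ (haB t ht j)).mono
              (inside_le_outside (hdisj t ht s hsS hst.symm))
          exact hr.trans (h1.symm.trans (h3.trans h2))
      · exact ⟨y, by simp [Y', hy, hyi], hr⟩

end Trifurcation

section PercGraph

variable {d : ℕ}

lemma unitVec_ne_zero (i : Fin d) : unitVec d i ≠ 0 := fun h => by
  have := congrFun h i; simp [unitVec] at this

/-- The graph of open edges. -/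
def pg (ω : Config d) : SimpleGraph (V d) where
  Adj x y := ∃ i, (y = x + unitVec d i ∧ ω (x, i) = true) ∨
    (x = y + unitVec d i ∧ ω (y, i) = true)
  symm.symm := by
    rintro x y ⟨i, h⟩
    exact ⟨i, h.symm⟩
  loopless.irrefl := by
    rintro x ⟨i, h⟩
    have : x = x + unitVec d i := by rcases h with h | h <;> exact h.1
    exact unitVec_ne_zero i (left_eq_add.1 this)

lemma edgeOpen_iff (ω : Config d) (x e : V d) : edgeOpen ω x e ↔ (pg ω).Adj x (x + e) := by
  unfold edgeOpen
  refine exists_congr fun i => ?_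
  refine or_congr ?_ ?_
  · simp [add_right_inj]
  · constructor
    · rintro ⟨rfl, h⟩
      refine ⟨by simp, ?_⟩
      rwa [← sub_eq_add_neg]
    · rintro ⟨h1, h2⟩
      have he : e = -unitVec d i := by
        have : x + (e + unitVec d i) = x := by rw [← add_assoc]; exact h1.symm
        exact eq_neg_of_add_eq_zero_left (add_eq_left.1 this)
      refine ⟨he, ?_⟩
      rw [he, ← sub_eq_add_neg] at h2
      exact h2

lemma mem_Ud_of_edgeOpen {ω : Config d} {x e : V d} (h : edgeOpen ω x e) : e ∈ Ud d := by
  obtain ⟨i, h | h⟩ := h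
  · simp [Ud, h.1]
  · simp [Ud, h.1]

lemma edgeOpen_shift (z : V d) (ω : Config d) (x e : V d) :
    edgeOpen (shift z ω) x e ↔ edgeOpen ω (x + z) e := by
  unfold edgeOpen shift
  refine exists_congr fun i => ?_
  have : x - unitVec d i + z = x + z - unitVec d i := by abel
  simp [this]

lemma pg_shift_adj (z : V d) (ω : Config d) (x y : V d) :
    (pg (shift z ω)).Adj x y ↔ (pg ω).Adj (x + z) (y + z) := by
  have h1 := edgeOpen_iff (shift z ω) x (y - x)
  have h2 := edgeOpen_iff ω (x + z) (y - x)
  rw [edgeOpen_shift] at h1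
  have e1 : x + (y - x) = y := by abel
  have e2 : x + z + (y - x) = y + z := by abel
  rw [e1] at h1; rw [e2] at h2
  rw [← h1, h2]

/-- Shifting as a graph isomorphism. -/
def pgShiftIso (z : V d) (ω : Config d) : pg (shift z ω) ≃g pg ω where
  toEquiv := Equiv.addRight z
  map_rel_iff' := by
    intro x y
    exact (pg_shift_adj z ω x y).symm

lemma pg_shift_reach (z : V d) (ω : Config d) (x y : V d) :
    (pg (shift z ω)).Reachable x y ↔ (pg ω).Reachable (x + z) (y + z) :=
  ((pgShiftIso z ω).reachable_iff (u := x) (v := y)).symm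

lemma pg_adj_sub {ω : Config d} {x y : V d} : (pg ω).Adj x y ↔ edgeOpen ω x (y - x) := by
  rw [edgeOpen_iff]; simp

lemma reach_of_path {ω : Config d} {γ : ℕ → V d} {n : ℕ} (h : IsOpenPath ω γ n) :
    ∀ k ≤ n, (pg ω).Reachable (γ 0) (γ k) := by
  intro k
  induction k with
  | zero => intro _; exact SimpleGraph.Reachable.refl _
  | succ k ih =>
    intro hk
    exact (ih (by omega)).trans (pg_adj_sub.2 (h k (by omega)).2).reachable

lemma path_of_reach {ω : Config d} {x y : V d} (h : (pg ω).Reachable x y) :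
    ∃ (γ : ℕ → V d) (n : ℕ), γ 0 = x ∧ IsOpenPath ω γ n ∧ γ n = y := by
  refine reach_induct (p := fun x => ∃ (γ : ℕ → V d) (n : ℕ), γ 0 = x ∧ IsOpenPath ω γ n ∧ γ n = y)
    h ⟨fun _ => y, 0, rfl, fun k hk => by omega, rfl⟩ ?_
  rintro a b hab _ ⟨γ, n, h0, hp, hn⟩
  refine ⟨fun k => if k = 0 then a else γ (k - 1), n + 1, by simp, ?_, by simp [hn]⟩
  intro k hk
  have hab' := pg_adj_sub.1 hab
  rcases Nat.eq_zero_or_pos k with rfl | hk0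
  · simp only [zero_add, one_ne_zero, if_false, if_true, Nat.sub_self, h0]
    exact ⟨mem_Ud_of_edgeOpen hab', hab'⟩
  · have := hp (k - 1) (by omega)
    have e : k - 1 + 1 = k := by omega
    rw [e] at this
    simpa [hk0.ne'] using this

/-- The open cluster of `x`. -/
def clu (ω : Config d) (x : V d) : Set (V d) := {y | (pg ω).Reachable x y}

lemma finite_inBox (r : ℝ) : {x : V d | inBox x r}.Finite := by
  refine (Set.finite_Icc (fun _ => -⌈r⌉ : V d) (fun _ => ⌈r⌉)).subset ?_
  intro x hx
  have h : ∀ i, |x i| ≤ ⌈r⌉ := fun i => by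
    have := hx i
    have h2 : ((|x i| : ℤ) : ℝ) ≤ (⌈r⌉ : ℝ) := by push_cast; exact this.trans (Int.le_ceil r)
    exact_mod_cast h2
  exact ⟨fun i => (abs_le.1 (h i)).1, fun i => (abs_le.1 (h i)).2⟩

lemma finite_subset_inBox {s : Set (V d)} (hs : s.Finite) : ∃ R : ℕ, ∀ x ∈ s, inBox x R := by
  have : ∀ x : V d, ∃ R : ℕ, inBox x R := by
    intro x
    refine ⟨∑ i, (x i).natAbs, fun i => ?_⟩
    have : (x i).natAbs ≤ ∑ i, (x i).natAbs :=
      Finset.single_le_sum (f := fun i => (x i).natAbs) (fun _ _ => Nat.zero_le _)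
        (Finset.mem_univ i)
    have h2 : ((x i).natAbs : ℝ) ≤ ((∑ i, (x i).natAbs : ℕ) : ℝ) := by exact_mod_cast this
    rw [Nat.cast_natAbs] at h2
    push_cast at h2 ⊢
    exact h2
  choose R hR using this
  refine ⟨hs.toFinset.sup R, fun x hx i => (hR x i).trans ?_⟩
  exact_mod_cast Finset.le_sup (f := R) (hs.mem_toFinset.2 hx)

lemma memCluster_iff (ω : Config d) (x : V d) : memCluster ω x ↔ (clu ω x).Infinite := by
  constructor
  · intro h hfin
    obtain ⟨R, hR⟩ := finite_subset_inBox hfin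
    obtain ⟨γ, n, h0, hp, hn⟩ := h R
    refine hn (hR _ ?_)
    have := reach_of_path hp n le_rfl
    rw [h0] at this; exact this
  · intro h R
    obtain ⟨y, hy, hyR⟩ := h.exists_notMem_finite (finite_inBox (R : ℝ))
    obtain ⟨γ, n, h0, hp, hn⟩ := path_of_reach hy
    exact ⟨γ, n, h0, hp, by rw [hn]; exact hyR⟩

lemma clu_shift (z : V d) (ω : Config d) (x : V d) :
    clu (shift z ω) x = (fun y => y + z) ⁻¹' clu ω (x + z) := by
  ext y; exact pg_shift_reach z ω x y

lemma infinite_clu_shift (z : V d) (ω : Config d) (x : V d) :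
    (clu (shift z ω) x).Infinite ↔ (clu ω (x + z)).Infinite := by
  rw [clu_shift]
  refine not_congr ⟨fun h => ?_, fun h => h.preimage (add_left_injective z).injOn⟩
  exact Set.finite_of_finite_preimage h (fun y _ => ⟨y - z, by simp⟩)

lemma shift_mem_cluZero (ω : Config d) (x : V d) : shift x ω ∈ cluZero d ↔ (clu ω x).Infinite := by
  change memCluster (shift x ω) 0 ↔ _
  rw [memCluster_iff, infinite_clu_shift, zero_add]

lemma shift_shift (x y : V d) (ω : Config d) : shift x (shift y ω) = shift (x + y) ω := by
  funext b; simp [shift, add_assoc]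

lemma shift_zero (ω : Config d) : shift 0 ω = ω := by
  funext b; simp [shift]

lemma clu_eq_of_reach {ω : Config d} {x y : V d} (h : (pg ω).Reachable x y) :
    clu ω x = clu ω y := by
  ext z; exact ⟨fun h' => h.symm.trans h', fun hh => h.trans hh⟩

/-- Family of graphs depending measurably on a parameter. -/
lemma measurableSet_reach {α W : Type*} [MeasurableSpace α] [Countable W] (G : α → SimpleGraph W)
    (hG : ∀ x y, MeasurableSet {ω | (G ω).Adj x y}) (x y : W) :
    MeasurableSet {ω | (G ω).Reachable x y} := by
  let R : ℕ → W → Set α := fun n => Nat.rec (fun y => {_ω | x = y})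
    (fun _ ih y => ⋃ z, (ih z ∩ {ω | (G ω).Adj z y})) n
  have hR : ∀ n y, MeasurableSet (R n y) := by
    intro n
    induction n with
    | zero => intro y; exact MeasurableSet.const _
    | succ n ih => intro y; exact MeasurableSet.iUnion fun z => (ih z).inter (hG z y)
  have : {ω | (G ω).Reachable x y} = ⋃ n, R n y := by
    ext ω
    simp only [Set.mem_iUnion]
    constructor
    · intro h0
      have h : (G ω).Reachable x y := h0
      clear h0
      rw [SimpleGraph.reachable_iff_reflTransGen] at h
      induction h with
      | refl => exact ⟨0, rfl⟩
      | tail _ hbc ih =>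
        obtain ⟨n, hn⟩ := ih
        exact ⟨n + 1, Set.mem_iUnion.2 ⟨_, hn, hbc⟩⟩
    · rintro ⟨n, hn⟩
      induction n generalizing y with
      | zero =>
        have : x = y := hn
        subst this; exact SimpleGraph.Reachable.refl (G := G ω) x
      | succ n ih =>
        obtain ⟨z, hz, hzy⟩ := Set.mem_iUnion.1 hn
        have h1 : (G ω).Reachable x z := ih z hz
        exact h1.trans (SimpleGraph.Adj.reachable hzy)
  rw [this]
  exact MeasurableSet.iUnion fun n => hR n y

lemma measurableSet_infinite {α W : Type*} [MeasurableSpace α] [Countable W] (C : α → Set W)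
    (hC : ∀ y, MeasurableSet {ω | y ∈ C ω}) : MeasurableSet {ω | (C ω).Infinite} := by
  have : {ω | (C ω).Infinite} = ⋂ F : Finset W, ⋃ y : {y // y ∉ F}, {ω | y.1 ∈ C ω} := by
    ext ω
    simp only [Set.mem_iInter, Set.mem_iUnion, Set.mem_setOf_eq]
    constructor
    · intro h F
      obtain ⟨y, hy, hyF⟩ := Set.Infinite.exists_notMem_finset h F
      exact ⟨⟨y, hyF⟩, hy⟩
    · intro h hfin
      obtain ⟨y, hy⟩ := h hfin.toFinset
      exact y.2 (hfin.mem_toFinset.2 hy)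
  rw [this]
  exact MeasurableSet.iInter fun F => MeasurableSet.iUnion fun y => hC _

lemma measurableSet_state (b : EdgeIx d) : MeasurableSet {ω : Config d | ω b = true} :=
  (measurable_pi_apply (X := fun _ : EdgeIx d => Bool) b) (measurableSet_singleton true)

lemma measurableSet_adj (x y : V d) : MeasurableSet {ω : Config d | (pg ω).Adj x y} := by
  have : {ω : Config d | (pg ω).Adj x y} = ⋃ i, (({_ω | y = x + unitVec d i} ∩ {ω | ω (x, i) = true}) ∪
      ({_ω | x = y + unitVec d i} ∩ {ω | ω (y, i) = true})) := by
    ext ω; simp [pg]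
  rw [this]
  exact MeasurableSet.iUnion fun i => ((MeasurableSet.const _).inter (measurableSet_state _)).union
    ((MeasurableSet.const _).inter (measurableSet_state _))

lemma measurableSet_pgreach (x y : V d) : MeasurableSet {ω : Config d | (pg ω).Reachable x y} :=
  measurableSet_reach pg measurableSet_adj x y

lemma measurableSet_cluInf (x : V d) : MeasurableSet {ω : Config d | (clu ω x).Infinite} :=
  measurableSet_infinite _ fun y => measurableSet_pgreach x y

lemma measurableSet_cluZero : MeasurableSet (cluZero d) := by
  have : cluZero d = {ω : Config d | (clu ω 0).Infinite} := by
    ext ω; exact memCluster_iff ω 0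
  rw [this]; exact measurableSet_cluInf 0

end PercGraph

section Uniqueness

variable {d : ℕ}

/-- The box of radius `L` around `z`. -/
def bx (L : ℕ) (z : V d) : Set (V d) := {y | ∀ i, |y i - z i| ≤ (L : ℤ)}

lemma finite_bx (L : ℕ) (z : V d) : (bx L z).Finite := by
  refine (Set.finite_Icc (fun i => z i - L : V d) (fun i => z i + L)).subset ?_
  intro x hx
  have h := fun i => abs_le.1 (hx i)
  exact ⟨fun i => by have := h i; simp only; omega, fun i => by have := h i; simp only; omega⟩

lemma exists_bx {s : Set (V d)} (hs : s.Finite) : ∃ L : ℕ, s ⊆ bx L 0 := by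
  obtain ⟨R, hR⟩ := finite_subset_inBox hs
  refine ⟨R, fun x hx i => ?_⟩
  have := hR x hx i
  simp only [Pi.zero_apply, sub_zero]
  exact_mod_cast this

open Classical in
/-- Edges inside the box. -/
def bxEdges (L : ℕ) : Finset (EdgeIx d) :=
  ((finite_bx (d := d) L 0).toFinset ×ˢ Finset.univ).filter fun b => b.1 + unitVec d b.2 ∈ bx L 0

lemma mem_bxEdges {L : ℕ} {b : EdgeIx d} :
    b ∈ bxEdges L ↔ b.1 ∈ bx L 0 ∧ b.1 + unitVec d b.2 ∈ bx L 0 := by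
  simp [bxEdges]

lemma outside_openEdges (L : ℕ) (ω : Config d) :
    outsideG (pg (openEdges (bxEdges L) ω)) (bx L 0) = outsideG (pg ω) (bx L 0) := by
  ext x y
  simp only [outsideG, pg]
  refine and_congr_left fun hxy => ?_
  refine exists_congr fun i => ?_
  refine or_congr ?_ ?_
  · refine and_congr_right fun h => ?_
    have : (x, i) ∉ bxEdges (d := d) L := by
      rw [mem_bxEdges]; rw [h] at hxy; exact hxy
    simp [openEdges, this]
  · refine and_congr_right fun h => ?_
    have : (y, i) ∉ bxEdges (d := d) L := by
      rw [mem_bxEdges]; rw [h] at hxy; exact fun h' => hxy h'.symm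
    simp [openEdges, this]

lemma pg_le_openEdges (D : Finset (EdgeIx d)) (ω : Config d) : pg ω ≤ pg (openEdges D ω) := by
  rintro x y ⟨i, h⟩
  refine ⟨i, h.imp (fun h => ⟨h.1, ?_⟩) (fun h => ⟨h.1, ?_⟩)⟩ <;> simp [openEdges, h.2]

lemma inside_openEdges_step (L : ℕ) (ω : Config d) {x : V d} (i : Fin d) (hx : x ∈ bx L 0)
    (hy : x + unitVec d i ∈ bx L 0) :
    (insideG (pg (openEdges (bxEdges L) ω)) (bx L 0)).Adj x (x + unitVec d i) := by
  refine ⟨⟨i, Or.inl ⟨rfl, ?_⟩⟩, hx, hy⟩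
  have : (x, i) ∈ bxEdges (d := d) L := mem_bxEdges.2 ⟨hx, hy⟩
  simp [openEdges, this]

lemma inside_openEdges_zero (L : ℕ) (ω : Config d) : ∀ (n : ℕ) (x : V d), x ∈ bx L 0 →
    ∑ i, (x i).natAbs = n →
    (insideG (pg (openEdges (bxEdges L) ω)) (bx L 0)).Reachable x 0 := by
  intro n
  induction n with
  | zero =>
    intro x _ h
    have : x = 0 := by
      funext i
      have := (Finset.sum_eq_zero_iff.1 h) i (Finset.mem_univ i)
      simpa using this
    rw [this]
  | succ n ih =>
    intro x hx h
    obtain ⟨i, hi⟩ : ∃ i, x i ≠ 0 := by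
      by_contra hcon
      push Not at hcon
      simp [hcon] at h
    have hsum : ∀ y : V d, (∀ j, j ≠ i → y j = x j) → (y i).natAbs + 1 = (x i).natAbs →
        ∑ j, (y j).natAbs = n := by
      intro y h1 h2
      rw [← Finset.add_sum_erase _ _ (Finset.mem_univ i)] at h ⊢
      have : ∑ j ∈ Finset.univ.erase i, (y j).natAbs = ∑ j ∈ Finset.univ.erase i, (x j).natAbs :=
        Finset.sum_congr rfl fun j hj => by rw [h1 j (Finset.ne_of_mem_erase hj)]
      omega
    have hbx : ∀ y : V d, (∀ j, j ≠ i → y j = x j) → (y i).natAbs + 1 = (x i).natAbs →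
        y ∈ bx L 0 := by
      intro y h1 h2 j
      by_cases hj : j = i
      · subst hj
        have := hx j
        simp only [Pi.zero_apply, sub_zero] at this ⊢
        rw [Int.abs_eq_natAbs] at this ⊢
        omega
      · rw [h1 j hj]; exact hx j
    rcases lt_or_gt_of_ne hi with hneg | hpos
    · have h1 : ∀ j, j ≠ i → (x + unitVec d i) j = x j := fun j hj => by simp [unitVec, hj]
      have h2 : ((x + unitVec d i) i).natAbs + 1 = (x i).natAbs := by
        simp only [Pi.add_apply, unitVec, if_true]; omega
      have hy := hbx _ h1 h2
      exact (inside_openEdges_step L ω i hx hy).reachable.trans (ih _ hy (hsum _ h1 h2))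
    · have h1 : ∀ j, j ≠ i → (x - unitVec d i) j = x j := fun j hj => by simp [unitVec, hj]
      have h2 : ((x - unitVec d i) i).natAbs + 1 = (x i).natAbs := by
        simp only [Pi.sub_apply, unitVec, if_true]; omega
      have hy := hbx _ h1 h2
      have hs := inside_openEdges_step L ω i hy (by simpa using hx)
      rw [sub_add_cancel] at hs
      exact hs.symm.reachable.trans (ih _ hy (hsum _ h1 h2))

lemma inside_openEdges (L : ℕ) (ω : Config d) {x y : V d} (hx : x ∈ bx L 0) (hy : y ∈ bx L 0) :
    (insideG (pg (openEdges (bxEdges L) ω)) (bx L 0)).Reachable x y :=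
  (inside_openEdges_zero L ω _ x hx rfl).trans (inside_openEdges_zero L ω _ y hy rfl).symm

lemma inside_le {W : Type*} (G : SimpleGraph W) (B : Set W) : insideG G B ≤ G := fun _ _ h => h.1
lemma outside_le {W : Type*} (G : SimpleGraph W) (B : Set W) : outsideG G B ≤ G := fun _ _ h => h.1

lemma firstHit' {W : Type*} {G : SimpleGraph W} {B' : Set W} {x c : W}
    (h : G.Reachable x c) (hc : c ∈ B') :
    ∃ c' ∈ B', (outsideG G B').Reachable x c' := by
  have : outsideG G ∅ = G := by ext x y; simp [outsideG]
  rw [← this] at h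
  exact firstHit h hc

/-- The trifurcation event for the box centred at `z`. -/
def TrifAt (L : ℕ) (z : V d) (ω : Config d) : Prop :=
  (∀ x ∈ bx L z, ∀ y ∈ bx L z, (insideG (pg ω) (bx L z)).Reachable x y) ∧
  ∃ a : Fin 3 → V d, (∀ i, a i ∈ bx L z) ∧
    (∀ i, {y | (outsideG (pg ω) (bx L z)).Reachable (a i) y}.Infinite) ∧
    ∀ i j, i ≠ j → ¬ (outsideG (pg ω) (bx L z)).Reachable (a i) (a j)

lemma exists_infinite_branch (L : ℕ) (ω : Config d) {x : V d} (hx : x ∈ bx L 0)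
    (hinf : (clu ω x).Infinite) :
    ∃ a ∈ bx L 0, (pg ω).Reachable x a ∧
      {y | (outsideG (pg ω) (bx L 0)).Reachable a y}.Infinite := by
  by_contra hcon
  push Not at hcon
  apply hinf
  refine Set.Finite.subset (s := ⋃ a ∈ {a ∈ bx L 0 | (pg ω).Reachable x a},
    {y | (outsideG (pg ω) (bx L 0)).Reachable a y}) ?_ ?_
  · refine Set.Finite.biUnion ((finite_bx L 0).subset (Set.sep_subset _ _)) ?_
    rintro a ⟨ha, hxa⟩
    exact hcon a ha hxa
  · intro y hy
    have hy : (pg ω).Reachable x y := hy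
    obtain ⟨c, hc, hyc⟩ := firstHit' hy.symm hx
    refine Set.mem_biUnion (x := c) ⟨hc, ?_⟩ hyc.symm
    exact hy.trans (hyc.mono (outside_le _ _))

lemma trif_of_three (L : ℕ) (ω : Config d) (x : Fin 3 → V d) (hx : ∀ i, x i ∈ bx L 0)
    (hinf : ∀ i, (clu ω (x i)).Infinite) (hsep : ∀ i j, i ≠ j → ¬ (pg ω).Reachable (x i) (x j)) :
    TrifAt L 0 (openEdges (bxEdges L) ω) := by
  refine ⟨fun y hy z hz => inside_openEdges L ω hy hz, ?_⟩
  rw [outside_openEdges]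
  choose a ha har hai using fun i => exists_infinite_branch L ω (hx i) (hinf i)
  refine ⟨a, ha, hai, fun i j hij h => hsep i j hij ?_⟩
  exact (har i).trans ((h.mono (outside_le _ _)).trans (har j).symm)

lemma mem_bx_shift (L : ℕ) (z x : V d) : x + z ∈ bx L z ↔ x ∈ bx L 0 := by
  simp [bx]

/-- Isomorphism for inside graphs. -/
def insideIso (L : ℕ) (z : V d) (ω : Config d) :
    insideG (pg (shift z ω)) (bx L 0) ≃g insideG (pg ω) (bx L z) where
  toEquiv := Equiv.addRight z
  map_rel_iff' := by
    intro x y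
    change ((pg ω).Adj (x + z) (y + z) ∧ x + z ∈ bx L z ∧ y + z ∈ bx L z) ↔
      ((pg (shift z ω)).Adj x y ∧ x ∈ bx L 0 ∧ y ∈ bx L 0)
    rw [pg_shift_adj, mem_bx_shift, mem_bx_shift]

/-- Isomorphism for outside graphs. -/
def outsideIso (L : ℕ) (z : V d) (ω : Config d) :
    outsideG (pg (shift z ω)) (bx L 0) ≃g outsideG (pg ω) (bx L z) where
  toEquiv := Equiv.addRight z
  map_rel_iff' := by
    intro x y
    change ((pg ω).Adj (x + z) (y + z) ∧ ¬ (x + z ∈ bx L z ∧ y + z ∈ bx L z)) ↔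
      ((pg (shift z ω)).Adj x y ∧ ¬ (x ∈ bx L 0 ∧ y ∈ bx L 0))
    rw [pg_shift_adj, mem_bx_shift, mem_bx_shift]

lemma trifAt_shift {L : ℕ} {z : V d} {ω : Config d} (h : TrifAt L 0 (shift z ω)) :
    TrifAt L z ω := by
  obtain ⟨h1, a, ha, hinf, hsep⟩ := h
  have hin : ∀ x y, (insideG (pg (shift z ω)) (bx L 0)).Reachable x y ↔
      (insideG (pg ω) (bx L z)).Reachable (x + z) (y + z) := fun x y =>
    ((insideIso L z ω).reachable_iff (u := x) (v := y)).symm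
  have hout : ∀ x y, (outsideG (pg (shift z ω)) (bx L 0)).Reachable x y ↔
      (outsideG (pg ω) (bx L z)).Reachable (x + z) (y + z) := fun x y =>
    ((outsideIso L z ω).reachable_iff (u := x) (v := y)).symm
  refine ⟨?_, fun i => a i + z, fun i => (mem_bx_shift L z _).2 (ha i), fun i => ?_,
    fun i j hij h => hsep i j hij ((hout _ _).2 h)⟩
  · intro x hx y hy
    have := (hin (x - z) (y - z)).1 (h1 _ ((mem_bx_shift L z _).1 (by simpa using hx)) _
      ((mem_bx_shift L z _).1 (by simpa using hy)))
    simpa using this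
  · intro hfin
    refine hinf i ?_
    refine (hfin.preimage (f := fun y => y + z) (add_left_injective z).injOn).subset ?_
    intro y hy
    exact (hout _ _).1 hy

lemma measurableSet_trif (L : ℕ) (z : V d) : MeasurableSet {ω : Config d | TrifAt L z ω} := by
  have hin : ∀ x y, MeasurableSet {ω : Config d | (insideG (pg ω) (bx L z)).Reachable x y} := by
    refine measurableSet_reach _ fun x y => ?_
    exact (measurableSet_adj x y).inter (MeasurableSet.const _)
  have hout : ∀ x y, MeasurableSet {ω : Config d | (outsideG (pg ω) (bx L z)).Reachable x y} := by
    refine measurableSet_reach _ fun x y => ?_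
    exact (measurableSet_adj x y).inter (MeasurableSet.const _)
  have : {ω : Config d | TrifAt L z ω} =
      (⋂ x ∈ bx L z, ⋂ y ∈ bx L z, {ω | (insideG (pg ω) (bx L z)).Reachable x y}) ∩
      ⋃ a : Fin 3 → V d, ({_ω | ∀ i, a i ∈ bx L z} ∩
        (⋂ i, {ω | {y | (outsideG (pg ω) (bx L z)).Reachable (a i) y}.Infinite}) ∩
        ⋂ i, ⋂ j, ⋂ _ : i ≠ j, {ω | (outsideG (pg ω) (bx L z)).Reachable (a i) (a j)}ᶜ) := by
    ext ω
    simp only [TrifAt, Set.mem_setOf_eq, Set.mem_inter_iff, Set.mem_iInter, Set.mem_iUnion,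
      Set.mem_compl_iff, and_assoc]
  rw [this]
  refine MeasurableSet.inter ?_ ?_
  · exact MeasurableSet.biInter (Set.to_countable _) fun x _ =>
      MeasurableSet.biInter (Set.to_countable _) fun y _ => hin x y
  · refine MeasurableSet.iUnion fun a => ((MeasurableSet.const _).inter ?_).inter ?_
    · exact MeasurableSet.iInter fun i => measurableSet_infinite _ fun y => hout _ y
    · exact MeasurableSet.iInter fun i => MeasurableSet.iInter fun j =>
        MeasurableSet.iInter fun _ => (hout _ _).compl

end Uniqueness

section Uniqueness2

variable {d : ℕ} {q : ℝ}

/-- Boundary of a cube. -/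
def bdry (lo hi : ℤ) : Finset (V d) :=
  Finset.univ.biUnion fun i : Fin d =>
    Fintype.piFinset fun j : Fin d => if j = i then {lo, hi} else Finset.Icc lo hi

lemma mem_bdry {lo hi : ℤ} {y : V d} (hy : ∀ j, lo ≤ y j ∧ y j ≤ hi) {i : Fin d}
    (hi' : y i = lo ∨ y i = hi) : y ∈ bdry lo hi := by
  simp only [bdry, Finset.mem_biUnion, Finset.mem_univ, true_and, Fintype.mem_piFinset]
  refine ⟨i, fun j => ?_⟩
  by_cases h : j = i
  · subst h; simpa using hi'
  · simp [h, hy j]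

lemma card_bdry {lo hi : ℤ} {K : ℕ} (hK : (hi + 1 - lo).toNat = K) :
    (bdry (d := d) lo hi).card * K ≤ 2 * d * K ^ d := by
  have h1 : (bdry (d := d) lo hi).card ≤ ∑ i : Fin d, (Fintype.piFinset fun j : Fin d =>
      if j = i then ({lo, hi} : Finset ℤ) else Finset.Icc lo hi).card := Finset.card_biUnion_le
  refine (Nat.mul_le_mul_right K h1).trans ?_
  rw [Finset.sum_mul]
  have h2 : ∀ i : Fin d, (Fintype.piFinset fun j : Fin d =>
      if j = i then ({lo, hi} : Finset ℤ) else Finset.Icc lo hi).card * K ≤ 2 * K ^ d := by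
    intro i
    rw [Fintype.card_piFinset, ← Finset.mul_prod_erase _ _ (Finset.mem_univ i)]
    have h3 : ∏ j ∈ Finset.univ.erase i, (if j = i then ({lo, hi} : Finset ℤ)
        else Finset.Icc lo hi).card = K ^ (d - 1) := by
      rw [Finset.prod_congr rfl (g := fun _ => K), Finset.prod_const,
        Finset.card_erase_of_mem (Finset.mem_univ i)]
      · simp
      · intro j hj
        rw [if_neg (Finset.ne_of_mem_erase hj), Int.card_Icc, hK]
    rw [h3, if_pos rfl]
    have h4 : ({lo, hi} : Finset ℤ).card ≤ 2 := Finset.card_le_two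
    have hd : d - 1 + 1 = d := by have := i.pos; omega
    calc _ = ({lo, hi} : Finset ℤ).card * K ^ (d - 1 + 1) := by ring
      _ ≤ 2 * K ^ (d - 1 + 1) := Nat.mul_le_mul_right _ h4
      _ = _ := by rw [hd]
  refine (Finset.sum_le_sum fun i _ => h2 i).trans ?_
  simp; ring_nf; rfl

lemma adj_coord {ω : Config d} {x y : V d} (h : (pg ω).Adj x y) (i : Fin d) :
    |y i - x i| ≤ 1 := by
  obtain ⟨j, h | h⟩ := h
  · rw [h.1]; simp only [Pi.add_apply, unitVec]; split_ifs <;> simp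
  · rw [h.1]; simp only [Pi.add_apply, unitVec]; split_ifs <;> simp

lemma hits_bdry {ω : Config d} {G : SimpleGraph (V d)} (hG : G ≤ pg ω) {lo hi : ℤ} {a : V d}
    (ha : ∀ j, lo ≤ a j ∧ a j ≤ hi) (hinf : {y | G.Reachable a y}.Infinite) :
    ∃ y ∈ bdry lo hi, G.Reachable a y := by
  obtain ⟨y, hy, hout⟩ := hinf.exists_notMem_finite (Set.finite_Icc (fun _ => lo : V d) (fun _ => hi))
  have hout' : ¬ ∀ j, lo ≤ y j ∧ y j ≤ hi := fun h => hout ⟨fun j => (h j).1, fun j => (h j).2⟩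
  refine reach_induct (p := fun a => (∀ j, lo ≤ a j ∧ a j ≤ hi) → ∃ y ∈ bdry lo hi, G.Reachable a y)
    hy (fun h => absurd h hout') ?_ ha
  intro a b hab _ ih ha
  by_cases hb : ∀ j, lo ≤ b j ∧ b j ≤ hi
  · obtain ⟨w, hw, hr⟩ := ih hb
    exact ⟨w, hw, hab.reachable.trans hr⟩
  · push Not at hb
    obtain ⟨j, hj⟩ := hb
    have h1 := abs_le.1 (adj_coord (hG hab) j)
    have h2 := ha j
    refine ⟨a, mem_bdry ha (i := j) ?_, SimpleGraph.Reachable.refl _⟩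
    by_cases h3 : lo ≤ b j
    · have := hj h3; right; omega
    · left; omega

/-- Grid points. -/
def gridPt (L n : ℕ) (k : Fin d → Fin n) : V d := fun i => (2 * L + 1 : ℤ) * ((k i : ℕ) : ℤ)

lemma grid_disjoint (L n : ℕ) {k k' : Fin d → Fin n} (h : k ≠ k') :
    Disjoint (bx L (gridPt L n k)) (bx L (gridPt L n k')) := by
  rw [Set.disjoint_left]
  intro y hy hy'
  obtain ⟨i, hi⟩ := Function.ne_iff.1 h
  have h1 := abs_le.1 (hy i)
  have h2 := abs_le.1 (hy' i)
  simp only [gridPt] at h1 h2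
  have hne : ((k i : ℕ) : ℤ) ≠ ((k' i : ℕ) : ℤ) := by
    intro h; apply hi; ext; exact_mod_cast h
  rcases lt_or_gt_of_ne hne with h3 | h3
  · nlinarith
  · nlinarith

open Classical in
lemma trif_card (L n : ℕ) (ω : Config d) :
    (Finset.univ.filter fun k : Fin d → Fin n => TrifAt L (gridPt L n k) ω).card ≤
      (bdry (d := d) (-(L : ℤ)) ((2 * L + 1 : ℤ) * n - L - 1)).card := by
  set S := Finset.univ.filter fun k : Fin d → Fin n => TrifAt L (gridPt L n k) ω with hS
  have hT : ∀ k ∈ S, TrifAt L (gridPt L n k) ω := fun k hk => (Finset.mem_filter.1 hk).2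
  have hex : ∀ k : Fin d → Fin n, ∃ a : Fin 3 → V d, k ∈ S → ((∀ i, a i ∈ bx L (gridPt L n k)) ∧
    (∀ i, {y | (outsideG (pg ω) (bx L (gridPt L n k))).Reachable (a i) y}.Infinite) ∧
    ∀ i j, i ≠ j → ¬ (outsideG (pg ω) (bx L (gridPt L n k))).Reachable (a i) (a j)) := by
    intro k
    by_cases hk : k ∈ S
    · obtain ⟨a, ha⟩ := (hT k hk).2
      exact ⟨a, fun _ => ha⟩
    · exact ⟨fun _ => 0, fun h => absurd h hk⟩
  choose a ha using hex
  refine trifurcation_count (pg ω) (fun k => bx L (gridPt L n k)) a S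
    (fun s _ t _ hst => grid_disjoint L n hst) (fun t ht => (hT t ht).1)
    (fun t ht => (ha t ht).1) (fun t ht => (ha t ht).2.2) _ ?_
  intro t ht i
  refine hits_bdry (outside_le _ _) ?_ ((ha t ht).2.1 i)
  intro j
  have h1 := abs_le.1 ((ha t ht).1 i j)
  simp only [gridPt] at h1
  have h2 : ((t j : ℕ) : ℤ) + 1 ≤ n := by exact_mod_cast (t j).2
  have h3 : (0 : ℤ) ≤ ((t j : ℕ) : ℤ) := by positivity
  constructor <;> nlinarith

lemma trif_null {P : Measure (Config d)} (hP : IsBernoulli d q P) (L : ℕ) :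
    P {ω : Config d | TrifAt L 0 ω} = 0 := by
  classical
  haveI := hP.1
  set T := {ω : Config d | TrifAt L 0 ω} with hTd
  have hTm : MeasurableSet T := measurableSet_trif L 0
  have key : ∀ n : ℕ, (n : ℝ≥0∞) ^ d * P T ≤
      ((bdry (d := d) (-(L : ℤ)) ((2 * L + 1 : ℤ) * n - L - 1)).card : ℝ≥0∞) := by
    intro n
    have h1 : ∑ k : Fin d → Fin n, P (shift (gridPt L n k) ⁻¹' T) = (n : ℝ≥0∞) ^ d * P T := by
      simp_rw [measure_shift_preimage hP _ hTm]
      simp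
    rw [← h1]
    have h2 : ∑ k : Fin d → Fin n, P (shift (gridPt L n k) ⁻¹' T) =
        ∫⁻ ω, ∑ k : Fin d → Fin n, (shift (gridPt L n k) ⁻¹' T).indicator 1 ω ∂P := by
      rw [lintegral_finset_sum]
      · refine Finset.sum_congr rfl fun k _ => ?_
        rw [lintegral_indicator_one (measurable_shift _ hTm)]
      · intro k _
        exact measurable_one.indicator (measurable_shift _ hTm)
    rw [h2]
    refine (lintegral_mono (g := fun _ =>
      ((bdry (d := d) (-(L : ℤ)) ((2 * L + 1 : ℤ) * n - L - 1)).card : ℝ≥0∞)) fun ω => ?_).trans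
      (by simp)
    simp only
    refine le_trans ?_ (Nat.cast_le.2 (trif_card L n ω))
    rw [Finset.card_eq_sum_ones, Finset.sum_filter, Nat.cast_sum]
    refine Finset.sum_le_sum fun k _ => ?_
    by_cases hk : shift (gridPt L n k) ω ∈ T
    · have : TrifAt L (gridPt L n k) ω := trifAt_shift hk
      rw [Set.indicator_of_mem (show ω ∈ shift (gridPt L n k) ⁻¹' T from hk)]
      simp [this]
    · rw [Set.indicator_of_notMem (show ω ∉ shift (gridPt L n k) ⁻¹' T from hk)]
      exact bot_le
  -- real version
  set t : ℝ := (P T).toReal with ht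
  have ht0 : 0 ≤ t := ENNReal.toReal_nonneg
  set M : ℕ := 2 * L + 1 with hM
  have key2 : ∀ n : ℕ, 0 < n → (n : ℝ) * (M * t) ≤ 2 * d * M ^ d := by
    intro n hn
    set Y := (bdry (d := d) (-(L : ℤ)) ((2 * L + 1 : ℤ) * n - L - 1)).card with hY
    have h1 : (n : ℝ) ^ d * t ≤ Y := by
      have := ENNReal.toReal_mono (by simp) (key n)
      simpa [ENNReal.toReal_mul] using this
    have h2 : Y * (M * n) ≤ 2 * d * (M * n) ^ d := by
      refine card_bdry ?_
      have : ((2 * L + 1 : ℤ) * n - L - 1 + 1 - (-(L : ℤ))) = ((M * n : ℕ) : ℤ) := by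
        rw [hM]; push_cast; ring
      rw [this, Int.toNat_natCast]
    have h2' : (Y : ℝ) * (M * n) ≤ 2 * d * (M * n) ^ d := by exact_mod_cast h2
    have hn' : (0 : ℝ) < n := by exact_mod_cast hn
    have hM0 : (0 : ℝ) ≤ M := by positivity
    have h3 : (n : ℝ) ^ d * t * (M * n) ≤ 2 * d * (M * n) ^ d :=
      (mul_le_mul_of_nonneg_right h1 (by positivity)).trans h2'
    rw [mul_pow] at h3
    have hnd : (0 : ℝ) < (n : ℝ) ^ d := by positivity
    refine le_of_mul_le_mul_left ?_ hnd
    calc (n : ℝ) ^ d * (n * (M * t)) = (n : ℝ) ^ d * t * (M * n) := by ring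
      _ ≤ _ := h3
      _ = _ := by ring
  have hMt : (M : ℝ) * t ≤ 0 := by
    by_contra hcon
    push Not at hcon
    obtain ⟨n, hn⟩ := exists_nat_gt ((2 * d * M ^ d : ℝ) / (M * t))
    have hn1 := key2 (n + 1) (Nat.succ_pos n)
    rw [div_lt_iff₀ hcon] at hn
    push_cast at hn1
    nlinarith
  have hM1 : (1 : ℝ) ≤ M := by rw [hM]; push_cast; nlinarith [(Nat.cast_nonneg L : (0 : ℝ) ≤ L)]
  have ht00 : t = 0 := by nlinarith
  rw [ht, ENNReal.toReal_eq_zero_iff] at ht00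
  exact ht00.resolve_right (measure_ne_top _ _)

lemma no_three {P : Measure (Config d)} (h0 : 0 < q) (h1 : q ≤ 1) (hP : IsBernoulli d q P) :
    ∀ᵐ ω ∂P, ∀ x : Fin 3 → V d, (∀ i, (clu ω (x i)).Infinite) →
      ∃ i j, i ≠ j ∧ (pg ω).Reachable (x i) (x j) := by
  rw [ae_all_iff]
  intro x
  obtain ⟨L, hL⟩ := exists_bx (Set.finite_range x)
  have := openEdges_null h0 h1 hP (bxEdges L) (trif_null hP L)
  rw [ae_iff]
  refine measure_mono_null ?_ this
  intro ω hω
  simp only [Set.mem_setOf_eq] at hω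
  push Not at hω
  exact trif_of_three L ω x (fun i => hL ⟨i, rfl⟩) hω.1 hω.2

theorem cluster_unique {P : Measure (Config d)} (hd : 0 < d) (h0 : 0 < q) (h1 : q ≤ 1)
    (hP : IsBernoulli d q P) :
    ∀ᵐ ω ∂P, ∀ x y, (clu ω x).Infinite → (clu ω y).Infinite → (pg ω).Reachable x y := by
  haveI := hP.1
  set A : Set (Config d) :=
    {ω | ∃ x y, (clu ω x).Infinite ∧ (clu ω y).Infinite ∧ ¬ (pg ω).Reachable x y} with hA
  have hAe : A = ⋃ x, ⋃ y, ({ω : Config d | (clu ω x).Infinite} ∩ ({ω | (clu ω y).Infinite} ∩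
      {ω | (pg ω).Reachable x y}ᶜ)) := by
    ext ω; simp [hA]
  have hAm : MeasurableSet A := by
    rw [hAe]
    exact MeasurableSet.iUnion fun x => MeasurableSet.iUnion fun y =>
      (measurableSet_cluInf x).inter ((measurableSet_cluInf y).inter (measurableSet_pgreach x y).compl)
  have hinv : ∀ z : V d, shift z ⁻¹' A = A := by
    intro z
    ext ω
    simp only [hA, Set.mem_preimage, Set.mem_setOf_eq]
    constructor
    · rintro ⟨x, y, hx, hy, hxy⟩
      rw [infinite_clu_shift] at hx hy
      rw [pg_shift_reach] at hxy
      exact ⟨_, _, hx, hy, hxy⟩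
    · rintro ⟨x, y, hx, hy, hxy⟩
      refine ⟨x - z, y - z, ?_, ?_, ?_⟩
      · rw [infinite_clu_shift, sub_add_cancel]; exact hx
      · rw [infinite_clu_shift, sub_add_cancel]; exact hy
      · rw [pg_shift_reach, sub_add_cancel, sub_add_cancel]; exact hxy
  have hA0 : P A = 0 := by
    rcases bernoulli_ergodic hd h0.le h1 hP hAm hinv with h | h
    · exact h
    have hAc : P Aᶜ = 0 := (prob_compl_eq_zero_iff hAm).2 h
    have h3 := no_three h0 h1 hP
    rw [hAe]
    refine measure_iUnion_null fun x => measure_iUnion_null fun y => ?_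
    obtain ⟨L, hL⟩ := exists_bx (Set.toFinite {x, y})
    have hn := openEdges_null h0 h1 hP (bxEdges L) hAc
    have hae : ∀ᵐ ω ∂P, openEdges (bxEdges L) ω ∈ A := by
      rw [ae_iff]; exact hn
    have hfin : ∀ᵐ ω ∂P, ω ∉ ({ω : Config d | (clu ω x).Infinite} ∩ ({ω | (clu ω y).Infinite} ∩
      {ω | (pg ω).Reachable x y}ᶜ)) := by
      filter_upwards [hae, h3] with ω hω h3 hxy
      obtain ⟨hx, hy, hnr⟩ := hxy
      have hxL : x ∈ bx L 0 := hL (by simp)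
      have hyL : y ∈ bx L 0 := hL (by simp)
      set ω' := openEdges (bxEdges L) ω with hω'
      have hle : pg ω ≤ pg ω' := pg_le_openEdges _ ω
      have hyx : (pg ω').Reachable y x := (inside_openEdges L ω hyL hxL).mono (inside_le _ _)
      have hclaim : ∀ u, (clu ω' u).Infinite → (pg ω').Reachable u x := by
        intro u hu
        by_contra hcon
        -- the cluster of u avoids the box
        have hav : ∀ c ∈ bx (d := d) L 0, ¬ (pg ω').Reachable u c := by
          intro c hc huc
          exact hcon (huc.trans ((inside_openEdges L ω hc hxL).mono (inside_le _ _)))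
        have hsub : clu ω' u ⊆ clu ω u := by
          intro v hv
          have e1 : outsideG (pg ω') ∅ = pg ω' := by ext a b; simp [outsideG]
          have hv' : (outsideG (pg ω') ∅).Reachable u v := by rw [e1]; exact hv
          have := transfer (B' := bx L 0) hv' (by rw [e1]; exact hav)
          rw [hω', outside_openEdges] at this
          exact this.mono (outside_le _ _)
        have hu' : (clu ω u).Infinite := hu.mono hsub
        obtain ⟨i, j, hij, hr⟩ := h3 ![x, y, u] (by
          intro i; fin_cases i
          · exact hx
          · exact hy
          · exact hu')
        have hux : ¬ (pg ω).Reachable u x := fun h => hcon (h.mono hle)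
        have huy : ¬ (pg ω).Reachable u y := fun h => hcon ((h.mono hle).trans hyx)
        fin_cases i <;> fin_cases j
        · exact hij rfl
        · exact hnr hr
        · exact hux hr.symm
        · exact hnr hr.symm
        · exact hij rfl
        · exact huy hr.symm
        · exact hux hr
        · exact huy hr
        · exact hij rfl
      obtain ⟨u, v, hu, hv, huv⟩ := hω
      exact huv ((hclaim u hu).trans (hclaim v hv).symm)
    exact measure_eq_zero_iff_ae_notMem.2 hfin
  have hae : ∀ᵐ ω ∂P, ω ∉ A := measure_eq_zero_iff_ae_notMem.1 hA0
  filter_upwards [hae] with ω hω x y hx hy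
  by_contra hxy
  exact hω ⟨x, y, hx, hy, hxy⟩

/-- Ergodicity seen from a point of the infinite cluster. -/
theorem cluster_ergodic {P : Measure (Config d)} (hd : 0 < d) (h0 : 0 < q) (h1 : q ≤ 1)
    (hP : IsBernoulli d q P) {A : Set (Config d)} (hA : MeasurableSet A)
    (hstep : ∀ᵐ ω ∂P, ω ∈ cluZero d → ∀ e, edgeOpen ω 0 e → ω ∈ A → shift e ω ∈ A) :
    P (cluZero d ∩ A) = 0 ∨ P (cluZero d ∩ Aᶜ) = 0 := by
  haveI := hP.1
  have hshift : ∀ᵐ ω ∂P, ∀ x : V d, shift x ω ∈ cluZero d → ∀ e, edgeOpen (shift x ω) 0 e →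
      shift x ω ∈ A → shift e (shift x ω) ∈ A := by
    rw [ae_all_iff]
    intro x
    exact (shift_measurePreserving hP x).quasiMeasurePreserving.ae hstep
  set A' : Set (Config d) := ⋃ x : V d, shift x ⁻¹' (cluZero d ∩ A) with hA'
  have hm : MeasurableSet (cluZero d ∩ A) := measurableSet_cluZero.inter hA
  have hA'm : MeasurableSet A' := MeasurableSet.iUnion fun x => measurable_shift x hm
  have hinv : ∀ z : V d, shift z ⁻¹' A' = A' := by
    intro z
    ext ω
    simp only [hA', Set.mem_preimage, Set.mem_iUnion, shift_shift]
    constructor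
    · rintro ⟨x, hx⟩; exact ⟨_, hx⟩
    · rintro ⟨x, hx⟩; exact ⟨x - z, by rwa [sub_add_cancel]⟩
  rcases bernoulli_ergodic hd h0.le h1 hP hA'm hinv with h | h
  · left
    refine measure_mono_null ?_ h
    intro ω hω
    exact Set.mem_iUnion.2 ⟨0, by simpa [shift_zero] using hω⟩
  · right
    have hAc : P A'ᶜ = 0 := (prob_compl_eq_zero_iff hA'm).2 h
    have hae : ∀ᵐ ω ∂P, ω ∈ A' := by rw [ae_iff]; exact hAc
    rw [measure_eq_zero_iff_ae_notMem]
    filter_upwards [hae, hshift, cluster_unique hd h0 h1 hP] with ω hω hs hu hcon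
    obtain ⟨hc0, hnA⟩ := hcon
    obtain ⟨x, hxc, hxA⟩ := Set.mem_iUnion.1 hω
    rw [shift_mem_cluZero] at hxc
    have hc0' : (clu ω 0).Infinite := (memCluster_iff ω 0).1 hc0
    have hr := hu 0 x hc0' hxc
    apply hnA
    have : shift 0 ω ∈ A := by
      refine reach_induct (p := fun z => shift z ω ∈ A) hr hxA ?_
      intro a b hab hbx hb
      have hbc : shift b ω ∈ cluZero d := by
        rw [shift_mem_cluZero, clu_eq_of_reach hbx]; exact hxc
      have := hs b hbc (a - b) (by
        rw [edgeOpen_shift, zero_add]; exact pg_adj_sub.1 hab.symm) hb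
      rwa [shift_shift, sub_add_cancel] at this
    rwa [shift_zero] at this

end Uniqueness2

section WalkRepr

variable {d : ℕ}

/-- The random map of the environment chain driven by a uniform variable. -/
def envMap (F : Config d → unitInterval → Step d) (ω : Config d) (u : unitInterval) : Config d :=
  shift (F ω u).1 ω

/-- The `k`-th step of the walk driven by uniform variables. -/
def stp (F : Config d → unitInterval → Step d) (q : Config d × (ℕ → unitInterval)) : Step d :=
  F q.1 (q.2 0)

/-- The first `N` steps. -/
def preW (F : Config d → unitInterval → Step d) (N : ℕ) (q : Config d × (ℕ → unitInterval)) :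
    Fin N → Step d := fun k => stp F ((skew (envMap F))^[k] q)

instance : MeasurableSingletonClass (Step d) := inferInstance
instance : DiscreteMeasurableSpace (Step d) := inferInstance

lemma measurable_envMap {F : Config d → unitInterval → Step d}
    (hF : Measurable (Function.uncurry F)) : Measurable (Function.uncurry (envMap F)) := by
  have h : Measurable (fun q : Step d × Config d => shift q.1.1 q.2) :=
    measurable_from_prod_countable_right fun e => measurable_shift e.1
  exact h.comp (hF.prodMk measurable_fst)

lemma measurable_stp {F : Config d → unitInterval → Step d}
    (hF : Measurable (Function.uncurry F)) : Measurable (stp F) :=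
  hF.comp (measurable_fst.prodMk ((measurable_pi_apply 0).comp measurable_snd))

lemma measurable_preW {F : Config d → unitInterval → Step d}
    (hF : Measurable (Function.uncurry F)) (N : ℕ) : Measurable (preW F N) :=
  measurable_pi_iff.2 fun k =>
    (measurable_stp hF).comp ((measurable_skew (measurable_envMap hF)).iterate _)

lemma pos_zero {n : ℕ} (s : Fin n → Step d) : pos s 0 = 0 := by simp [pos]

lemma pos_succ {n : ℕ} (s : Fin n → Step d) (k : Fin n) :
    pos s (k + 1) = pos s k + (s k).1 := by
  unfold pos
  have : Finset.univ.filter (fun j : Fin n => (j : ℕ) < k + 1) =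
      insert k (Finset.univ.filter (fun j : Fin n => (j : ℕ) < k)) := by
    ext j
    simp only [Finset.mem_filter, Finset.mem_univ, true_and, Finset.mem_insert, Fin.ext_iff]
    omega
  rw [this, Finset.sum_insert (by simp), add_comm]

lemma shift_pos_preW (F : Config d → unitInterval → Step d) (N : ℕ)
    (ω : Config d) (u : ℕ → unitInterval) (k : ℕ) (hk : k ≤ N) :
    shift (pos (preW F N (ω, u)) k) ω = ((skew (envMap F))^[k] (ω, u)).1 := by
  induction k with
  | zero => simp [pos_zero, shift_zero]
  | succ k ih =>
    rw [pos_succ _ ⟨k, hk⟩, Function.iterate_succ_apply', add_comm, ← shift_shift]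
    simp only [ih (by omega)]
    rfl

lemma partialSum_preW (F : Config d → unitInterval → Step d) (f : EnvSp d → ℝ) (N : ℕ)
    (ω : Config d) (u : ℕ → unitInterval) (m : ℕ) (hm : m ≤ N) :
    partialSumF f ω (preW F N (ω, u)) m =
      birkhoffSum (skew (envMap F)) (fun q => f (q.1, stp F q)) m (ω, u) := by
  unfold partialSumF birkhoffSum
  refine Finset.sum_bij (fun k _ => (k : ℕ)) ?_ ?_ ?_ ?_
  · intro k hk; simpa using hk
  · intro a _ b _ h; exact Fin.ext h
  · intro b hb
    have := Finset.mem_range.1 hb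
    exact ⟨⟨b, by omega⟩, by simpa using this, rfl⟩
  · intro k _
    simp only [envPair]
    rw [shift_pos_preW F N ω u k k.2.le]
    rfl

lemma pos_cons {n : ℕ} (e : Step d) (s : Fin n → Step d) (k : ℕ) :
    pos (Fin.cons e s : Fin (n + 1) → Step d) (k + 1) = e.1 + pos s k := by
  unfold pos
  rw [Finset.sum_filter, Finset.sum_filter, Fin.sum_univ_succ]
  simp

lemma pathProb_cons (κ : Config d → Step d → ℝ) (ω : Config d) {n : ℕ} (e : Step d)
    (s : Fin n → Step d) :
    pathProb κ ω (Fin.cons e s : Fin (n + 1) → Step d) = κ ω e * pathProb κ (shift e.1 ω) s := by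
  unfold pathProb
  rw [Fin.prod_univ_succ]
  simp [pos_zero, shift_zero, pos_cons, shift_shift, add_comm]

lemma preW_succ (F : Config d → unitInterval → Step d) (N : ℕ) (q : Config d × (ℕ → unitInterval)) :
    preW F (N + 1) q = Fin.cons (stp F q) (preW F N (skew (envMap F) q)) := by
  funext k
  refine Fin.cases ?_ (fun j => ?_) k
  · simp [preW]
  · simp [preW, Function.iterate_succ_apply]

lemma pathProb_repr {F : Config d → unitInterval → Step d}
    (hF : Measurable (Function.uncurry F)) {κ : Config d → Step d → ℝ}
    (hκ : ∀ ω e, 0 ≤ κ ω e)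
    (hFκ : ∀ ω e, (volume : Measure unitInterval) {v | F ω v = e} = ENNReal.ofReal (κ ω e))
    (N : ℕ) (ω : Config d) (s : Fin N → Step d) :
    iidLaw (volume : Measure unitInterval) {u | preW F N (ω, u) = s} =
      ENNReal.ofReal (pathProb κ ω s) := by
  induction N generalizing ω with
  | zero =>
    have : {u | preW F 0 (ω, u) = s} = Set.univ := by
      ext u; simp; exact Subsingleton.elim _ _
    rw [this]; simp [pathProb]
  | succ N ih =>
    have hD : MeasurableSet {u | preW F (N + 1) (ω, u) = s} :=
      ((measurable_preW hF (N + 1)).comp measurable_prodMk_left) (measurableSet_singleton s)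
    rw [measure_iid_cons hD]
    have hs : s = Fin.cons (s 0) (Fin.tail s) := (Fin.cons_self_tail s).symm
    set e := s 0 with he
    set t := Fin.tail s with ht
    have h1 : ∀ v, iidLaw (volume : Measure unitInterval)
        {u | consU (v, u) ∈ {u | preW F (N + 1) (ω, u) = s}} =
        Set.indicator {v | F ω v = e} (fun _ => ENNReal.ofReal (pathProb κ (shift e.1 ω) t)) v := by
      intro v
      by_cases hv : F ω v = e
      · rw [Set.indicator_of_mem (show v ∈ {v | F ω v = e} from hv), ← ih]
        congr 1
        ext u
        simp only [Set.mem_setOf_eq]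
        rw [hs, preW_succ, Fin.cons_inj]
        simp [stp, skew, envMap, hv]
      · rw [Set.indicator_of_notMem (show v ∉ {v | F ω v = e} from hv)]
        convert measure_empty (μ := iidLaw (volume : Measure unitInterval))
        ext u
        simp only [Set.mem_setOf_eq, Set.mem_empty_iff_false, iff_false]
        rw [hs, preW_succ, Fin.cons_inj]
        simp [stp, hv]
    simp_rw [h1]
    have hm : MeasurableSet {v | F ω v = e} :=
      (hF.comp measurable_prodMk_left) (measurableSet_singleton e)
    rw [lintegral_indicator_const hm, hFκ, hs, pathProb_cons, mul_comm,
      ENNReal.ofReal_mul (hκ _ _)]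

/-- Uniform representation of a Markov kernel on steps. -/
lemma exists_repr [Nonempty (Step d)] {κ : Config d → Step d → ℝ}
    (hm : ∀ e, Measurable (fun ω => κ ω e)) (hκ : ∀ ω e, 0 ≤ κ ω e) (h1 : ∀ ω, ∑ e, κ ω e = 1) :
    ∃ F : Config d → unitInterval → Step d, Measurable (Function.uncurry F) ∧
      ∀ ω, (volume : Measure unitInterval).map (F ω) =
        ∑ e, ENNReal.ofReal (κ ω e) • Measure.dirac e := by
  let K : Kernel (Config d) (Step d) :=
    { toFun := fun ω => ∑ e, ENNReal.ofReal (κ ω e) • Measure.dirac e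
      measurable' := by
        refine Measure.measurable_of_measurable_coe _ fun s _ => ?_
        simp only [Measure.coe_finset_sum, Finset.sum_apply, Measure.smul_apply, smul_eq_mul]
        exact Finset.measurable_sum _ fun e _ => (hm e).ennreal_ofReal.mul_const _ }
  haveI : IsMarkovKernel K := ⟨fun ω => ⟨by
    change (∑ e, ENNReal.ofReal (κ ω e) • Measure.dirac e : Measure (Step d)) Set.univ = 1
    simp only [Measure.coe_finset_sum, Finset.sum_apply, Measure.smul_apply, smul_eq_mul,
      measure_univ, mul_one]
    rw [← ENNReal.ofReal_sum_of_nonneg (fun e _ => hκ ω e), h1, ENNReal.ofReal_one]⟩⟩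
  obtain ⟨F, hF, h⟩ := Kernel.exists_measurable_map_eq_unitInterval K
  exact ⟨F, hF, h⟩

lemma repr_apply {κ : Config d → Step d → ℝ} {F : Config d → unitInterval → Step d}
    (hF : Measurable (Function.uncurry F))
    (h : ∀ ω, (volume : Measure unitInterval).map (F ω) =
        ∑ e, ENNReal.ofReal (κ ω e) • Measure.dirac e) (ω : Config d) (e : Step d) :
    (volume : Measure unitInterval) {v | F ω v = e} = ENNReal.ofReal (κ ω e) := by
  have h2 := congrArg (fun m : Measure (Step d) => m {e}) (h ω)
  rw [Measure.map_apply (f := F ω) (hF.comp measurable_prodMk_left) (measurableSet_singleton e)] at h2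
  refine Eq.trans ?_ (h2.trans ?_)
  · rfl
  · classical
    simp [Measure.coe_finset_sum, Set.indicator_apply]

end WalkRepr

section Station

variable {d : ℕ} {q : ℝ}

lemma ae_cond_iff' {P : Measure (Config d)} [IsProbabilityMeasure P] {p : Config d → Prop}
     :
    (∀ᵐ ω ∂(P[|cluZero d]), p ω) ↔ ∀ᵐ ω ∂P, ω ∈ cluZero d → p ω := by
  rw [ProbabilityTheory.cond, Measure.ae_ennreal_smul_measure_iff
    (ENNReal.inv_ne_zero.2 (measure_ne_top _ _)), ae_restrict_iff' measurableSet_cluZero]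

lemma ae_shift {P : Measure (Config d)} (hP : IsBernoulli d q P) {p : Config d → Prop}
    (h : ∀ᵐ ω ∂P, p ω) : ∀ᵐ ω ∂P, ∀ x : V d, p (shift x ω) :=
  ae_all_iff.2 fun x => (shift_measurePreserving hP x).quasiMeasurePreserving.ae h

lemma trans_zero_iff (ω : Config d) (e : Step d) : trans ω 0 e.1 = 0 ↔ ¬ edgeOpen ω 0 e.1 := by
  classical
  unfold trans
  split_ifs with h
  · simp only [h, not_true, iff_false]
    have : 0 < openDeg ω 0 := Finset.card_pos.2 ⟨e.1, Finset.mem_filter.2 ⟨e.2, h⟩⟩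
    positivity
  · simp [h]

lemma neg_mem_Ud {e : V d} (he : e ∈ Ud d) : -e ∈ Ud d := by
  simp only [Ud, Finset.mem_union, Finset.mem_image, Finset.mem_univ, true_and] at he ⊢
  rcases he with ⟨i, rfl⟩ | ⟨i, rfl⟩
  · exact Or.inr ⟨i, rfl⟩
  · exact Or.inl ⟨i, by simp⟩

lemma shift_mem_of_open {ω : Config d} (h : ω ∈ cluZero d) {e : V d} (he : edgeOpen ω 0 e) :
    shift e ω ∈ cluZero d := by
  rw [shift_mem_cluZero]
  have h0 := (shift_mem_cluZero ω 0).1 (by rwa [shift_zero])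
  have := ((edgeOpen_iff ω 0 e).1 he).reachable
  rw [zero_add] at this
  rwa [← clu_eq_of_reach this]

lemma edgeOpen_back {ω : Config d} {e : V d} (he : edgeOpen ω 0 e) :
    edgeOpen (shift e ω) 0 (-e) := by
  rw [edgeOpen_shift, edgeOpen_iff]
  have := ((edgeOpen_iff ω 0 e).1 he).symm
  simpa using this

/-- Pointwise properties of a pair `(κ, φ)` at an environment. -/
def GoodAt (κ : Config d → Step d → ℝ) (φ : Config d → ℝ) (ω : Config d) : Prop :=
  ∑ e, κ ω e = 1 ∧ (∀ e : Step d, κ ω e = 0 ↔ ¬ edgeOpen ω 0 e.1) ∧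
    φ ω = ∑ e : Step d, κ (shift (-e.1) ω) e * φ (shift (-e.1) ω)

lemma good_ae {P : Measure (Config d)} (hP : IsBernoulli d q P)
    {κ : Config d → Step d → ℝ} {φ : Config d → ℝ} (hpair : (κ, φ) ∈ Epairs d (P[|cluZero d])) :
    ∀ᵐ ω ∂P, ∀ x : V d, shift x ω ∈ cluZero d → GoodAt κ φ (shift x ω) := by
  haveI := hP.1
  refine ae_shift hP (p := fun ω => ω ∈ cluZero d → GoodAt κ φ ω) ?_
  rw [← ae_cond_iff']
  obtain ⟨⟨-, -, -, h1, h2⟩, -, -, -, h3⟩ := hpair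
  filter_upwards [h1, ae_all_iff.2 h2, h3] with ω a b c
  exact ⟨a, fun e => (b e).trans (trans_zero_iff ω e), c⟩

lemma GoodAt.self {κ : Config d → Step d → ℝ} {φ : Config d → ℝ} {ω : Config d}
    (h : ∀ x : V d, shift x ω ∈ cluZero d → GoodAt κ φ (shift x ω)) (h0 : ω ∈ cluZero d) :
    GoodAt κ φ ω := by
  have := h 0; rw [shift_zero] at this; exact this h0

open Classical in
/-- A version of `κ` which is a probability everywhere. -/
def fixK (κ : Config d → Step d → ℝ) (e0 : Step d) (ω : Config d) (e : Step d) : ℝ :=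
  if ∑ e, κ ω e = 1 then κ ω e else if e = e0 then 1 else 0

lemma fixK_meas {κ : Config d → Step d → ℝ} (hm : ∀ e, Measurable (fun ω => κ ω e))
    (e0 e : Step d) : Measurable (fun ω => fixK κ e0 ω e) := by
  unfold fixK
  refine Measurable.ite ?_ (hm e) measurable_const
  exact (Finset.measurable_sum _ fun e _ => hm e) (measurableSet_singleton 1)

lemma fixK_nonneg {κ : Config d → Step d → ℝ} (h : ∀ ω e, 0 ≤ κ ω e) (e0 : Step d)
    (ω : Config d) (e : Step d) : 0 ≤ fixK κ e0 ω e := by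
  unfold fixK; split_ifs
  · exact h ω e
  · exact zero_le_one
  · exact le_rfl

lemma fixK_sum (κ : Config d → Step d → ℝ) (e0 : Step d) (ω : Config d) :
    ∑ e, fixK κ e0 ω e = 1 := by
  unfold fixK
  split_ifs with h
  · exact h
  · simp

lemma fixK_good {κ : Config d → Step d → ℝ} {φ : Config d → ℝ} {ω : Config d} (e0 : Step d)
    (h : GoodAt κ φ ω) (e : Step d) : fixK κ e0 ω e = κ ω e := by
  unfold fixK; rw [if_pos h.1]

lemma pathProb_fix {κ : Config d → Step d → ℝ} {φ : Config d → ℝ} (e0 : Step d) (N : ℕ)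
    (ω : Config d) (h0 : ω ∈ cluZero d)
    (h : ∀ x : V d, shift x ω ∈ cluZero d → GoodAt κ φ (shift x ω)) (s : Fin N → Step d) :
    pathProb κ ω s = pathProb (fixK κ e0) ω s := by
  induction N generalizing ω with
  | zero => simp [pathProb]
  | succ N ih =>
    rw [← Fin.cons_self_tail s, pathProb_cons, pathProb_cons, fixK_good e0 (GoodAt.self h h0)]
    by_cases hz : κ ω (s 0) = 0
    · rw [hz]; simp
    · have ho : edgeOpen ω 0 (s 0).1 := by
        by_contra hc; exact hz (((GoodAt.self h h0).2.1 _).2 hc)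
      rw [ih _ (shift_mem_of_open h0 ho)]
      intro x; rw [shift_shift]; exact h _

/-- The invariant density is positive. -/
lemma phi_pos {P : Measure (Config d)} (hd : 0 < d) (h0 : 0 < q) (h1 : q ≤ 1)
    (hP : IsBernoulli d q P)
    {κ : Config d → Step d → ℝ} {φ : Config d → ℝ} (hpair : (κ, φ) ∈ Epairs d (P[|cluZero d])) :
    ∀ᵐ ω ∂(P[|cluZero d]), 0 < φ ω := by
  haveI := hP.1
  have hg := good_ae hP hpair
  obtain ⟨⟨-, hκ0, -, -, -⟩, hφm, hφ0, hφ1, -⟩ := hpair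
  have hA : MeasurableSet {ω | φ ω = 0} := hφm (measurableSet_singleton 0)
  have hstep : ∀ᵐ ω ∂P, ω ∈ cluZero d → ∀ e, edgeOpen ω 0 e → ω ∈ {ω | φ ω = 0} →
      shift e ω ∈ {ω | φ ω = 0} := by
    filter_upwards [hg] with ω hω hc e he (hz : φ ω = 0)
    have hG := GoodAt.self hω hc
    have hs := hG.2.2
    rw [hz] at hs
    have hmem : -e ∈ Ud d := neg_mem_Ud (mem_Ud_of_edgeOpen he)
    have ht := (Finset.sum_eq_zero_iff_of_nonneg
      (fun e _ => mul_nonneg (hκ0 _ _) (hφ0 _))).1 hs.symm ⟨-e, hmem⟩ (Finset.mem_univ _)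
    simp only [neg_neg] at ht
    rcases mul_eq_zero.1 ht with h | h
    · exact absurd (edgeOpen_back he) (((hω e (shift_mem_of_open hc he)).2.1 _).1 h)
    · exact h
  rcases cluster_ergodic hd h0 h1 hP hA hstep with h | h
  · rw [ae_cond_iff']
    filter_upwards [measure_eq_zero_iff_ae_notMem.1 h] with ω hω hc
    exact lt_of_le_of_ne (hφ0 ω) fun h => hω ⟨hc, h.symm⟩
  · exfalso
    have : ∀ᵐ ω ∂(P[|cluZero d]), φ ω = 0 := by
      rw [ae_cond_iff']
      filter_upwards [measure_eq_zero_iff_ae_notMem.1 h] with ω hω hc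
      by_contra h; exact hω ⟨hc, h⟩
    rw [integral_congr_ae this] at hφ1
    simp at hφ1

/-- The stationary law. -/
def statM (P₀ : Measure (Config d)) (φ : Config d → ℝ) : Measure (Config d) :=
  P₀.withDensity (fun ω => ENNReal.ofReal (φ ω))

lemma statM_prob {P₀ : Measure (Config d)} {φ : Config d → ℝ}
    (h0 : ∀ ω, 0 ≤ φ ω) (h1 : ∫ ω, φ ω ∂P₀ = 1) : IsProbabilityMeasure (statM P₀ φ) := by
  have hi : Integrable φ P₀ := by
    by_contra h; rw [integral_undef h] at h1; exact zero_ne_one h1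
  refine ⟨?_⟩
  rw [statM, withDensity_apply _ MeasurableSet.univ, Measure.restrict_univ,
    ← ofReal_integral_eq_lintegral_ofReal hi (ae_of_all _ h0), h1, ENNReal.ofReal_one]

lemma flow_le {κ : Config d → Step d → ℝ} {φ : Config d → ℝ} (hκ : ∀ ω e, 0 ≤ κ ω e)
    (hφ : ∀ ω, 0 ≤ φ ω) (e0 : Step d) {ω : Config d}
    (h : ∀ x : V d, shift x ω ∈ cluZero d → GoodAt κ φ (shift x ω)) :
    ∑ e : Step d, (cluZero d).indicator
        (fun ω => ENNReal.ofReal (fixK κ e0 ω e) * ENNReal.ofReal (φ ω)) (shift (-e.1) ω) ≤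
      (cluZero d).indicator (fun ω => ENNReal.ofReal (φ ω)) ω := by
  by_cases hc : ω ∈ cluZero d
  · rw [Set.indicator_of_mem hc, (GoodAt.self h hc).2.2,
      ENNReal.ofReal_sum_of_nonneg (fun e _ => mul_nonneg (hκ _ _) (hφ _))]
    refine Finset.sum_le_sum fun e _ => ?_
    by_cases he : shift (-e.1) ω ∈ cluZero d
    · rw [Set.indicator_of_mem he, fixK_good e0 (h _ he), ENNReal.ofReal_mul (hκ _ _)]
    · rw [Set.indicator_of_notMem he]; exact bot_le
  · rw [Set.indicator_of_notMem hc]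
    refine le_of_eq (Finset.sum_eq_zero fun e _ => ?_)
    by_cases he : shift (-e.1) ω ∈ cluZero d
    · rw [Set.indicator_of_mem he, fixK_good e0 (h _ he)]
      have : κ (shift (-e.1) ω) e = 0 := by
        rw [(h _ he).2.1]
        intro ho
        have := shift_mem_of_open he ho
        rw [shift_shift, add_neg_cancel, shift_zero] at this
        exact hc this
      simp [this]
    · rw [Set.indicator_of_notMem he]

lemma lintegral_cond {P : Measure (Config d)} {g : Config d → ℝ≥0∞} :
    ∫⁻ ω, g ω ∂(P[|cluZero d]) = (P (cluZero d))⁻¹ * ∫⁻ ω, (cluZero d).indicator g ω ∂P := by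
  rw [ProbabilityTheory.cond, lintegral_smul_measure, lintegral_indicator measurableSet_cluZero]
  rfl

lemma stationary {P : Measure (Config d)} (hP : IsBernoulli d q P)
    {κ : Config d → Step d → ℝ} {φ : Config d → ℝ} (hpair : (κ, φ) ∈ Epairs d (P[|cluZero d]))
    (e0 : Step d) {F : Config d → unitInterval → Step d}
    (hF : Measurable (Function.uncurry F))
    (h : ∀ ω, (volume : Measure unitInterval).map (F ω) =
        ∑ e, ENNReal.ofReal (fixK κ e0 ω e) • Measure.dirac e) :
    ((statM (P[|cluZero d]) φ).prod (volume : Measure unitInterval)).map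
      (Function.uncurry (envMap F)) = statM (P[|cluZero d]) φ := by
  haveI := hP.1
  have hg := good_ae hP hpair
  obtain ⟨⟨hκm, hκ0, -, -, -⟩, hφm, hφ0, hφ1, -⟩ := hpair
  haveI := statM_prob hφ0 hφ1
  have hΦ := measurable_envMap hF
  haveI : IsProbabilityMeasure (((statM (P[|cluZero d]) φ).prod
      (volume : Measure unitInterval)).map (Function.uncurry (envMap F))) :=
    Measure.isProbabilityMeasure_map hΦ.aemeasurable
  have hkm := fixK_meas hκm e0
  refine Measure.eq_of_le_of_isProbabilityMeasure (Measure.le_iff.2 fun A hA => ?_)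
  rw [Measure.map_apply hΦ hA, Measure.prod_apply (hΦ hA)]
  have hin : ∀ ω, (volume : Measure unitInterval)
      (Prod.mk ω ⁻¹' (Function.uncurry (envMap F) ⁻¹' A)) =
      ∑ e : Step d, ENNReal.ofReal (fixK κ e0 ω e) * A.indicator 1 (shift e.1 ω) := by
    intro ω
    have h2 := congrArg (fun m : Measure (Step d) => m {e | shift e.1 ω ∈ A}) (h ω)
    rw [Measure.map_apply (f := F ω) (hF.comp measurable_prodMk_left) (MeasurableSet.of_discrete)] at h2
    refine Eq.trans ?_ (h2.trans ?_)
    · rfl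
    · rw [Measure.coe_finsetSum, Finset.sum_apply]
      refine Finset.sum_congr rfl fun e _ => ?_
      rw [Measure.smul_apply, smul_eq_mul, Measure.dirac_apply' _ MeasurableSet.of_discrete]
      rfl
  simp_rw [hin]
  have hAm : ∀ e : Step d, Measurable (fun ω => A.indicator (1 : Config d → ℝ≥0∞) (shift e.1 ω)) :=
    fun e => (measurable_one.indicator hA).comp (measurable_shift e.1)
  have hsm : Measurable (fun ω => ∑ e : Step d,
      ENNReal.ofReal (fixK κ e0 ω e) * A.indicator (1 : Config d → ℝ≥0∞) (shift e.1 ω)) :=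
    Finset.measurable_sum _ fun e _ => (hkm e).ennreal_ofReal.mul (hAm e)
  have hwm : ∀ e : Step d, Measurable (fun ω => (cluZero d).indicator
        (fun ω => ENNReal.ofReal (fixK κ e0 ω e) * ENNReal.ofReal (φ ω)) ω) := fun e =>
    ((hkm e).ennreal_ofReal.mul hφm.ennreal_ofReal).indicator measurableSet_cluZero
  rw [statM, lintegral_withDensity_eq_lintegral_mul _ hφm.ennreal_ofReal hsm, withDensity_apply _ hA,
    ← lintegral_indicator hA, lintegral_cond, lintegral_cond]
  refine mul_le_mul' le_rfl ?_
  calc _ = ∫⁻ ω, ∑ e : Step d, (cluZero d).indicator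
        (fun ω => ENNReal.ofReal (fixK κ e0 ω e) * ENNReal.ofReal (φ ω)) ω *
          A.indicator 1 (shift e.1 ω) ∂P := by
        refine lintegral_congr fun ω => ?_
        by_cases hc : ω ∈ cluZero d
        · simp only [Set.indicator_of_mem hc, Pi.mul_apply, Finset.mul_sum]
          refine Finset.sum_congr rfl fun e _ => ?_
          ring
        · simp [Set.indicator_of_notMem hc]
    _ = ∑ e : Step d, ∫⁻ ω, (cluZero d).indicator
        (fun ω => ENNReal.ofReal (fixK κ e0 ω e) * ENNReal.ofReal (φ ω)) ω *
          A.indicator 1 (shift e.1 ω) ∂P :=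
        lintegral_finsetSum _ fun e _ => (hwm e).mul (hAm e)
    _ = ∑ e : Step d, ∫⁻ ω, (cluZero d).indicator
        (fun ω => ENNReal.ofReal (fixK κ e0 ω e) * ENNReal.ofReal (φ ω)) (shift (-e.1) ω) *
          A.indicator 1 ω ∂P := by
        refine Finset.sum_congr rfl fun e _ => ?_
        have hh := (shift_measurePreserving hP (-e.1)).lintegral_comp ((hwm e).mul (hAm e))
        simp only [Pi.mul_apply, shift_shift, add_neg_cancel, shift_zero] at hh
        exact hh.symm
    _ = ∫⁻ ω, ∑ e : Step d, (cluZero d).indicator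
        (fun ω => ENNReal.ofReal (fixK κ e0 ω e) * ENNReal.ofReal (φ ω)) (shift (-e.1) ω) *
          A.indicator 1 ω ∂P :=
        (lintegral_finsetSum _ fun e _ => ((hwm e).comp (measurable_shift _)).mul
          (measurable_one.indicator hA)).symm
    _ ≤ _ := by
        refine lintegral_mono_ae ?_
        filter_upwards [hg] with ω hω
        rw [← Finset.sum_mul]
        refine (mul_le_mul' (flow_le hκ0 hφ0 e0 hω) le_rfl).trans (le_of_eq ?_)
        by_cases hc : ω ∈ cluZero d <;> by_cases ha : ω ∈ A <;> simp [hc, ha]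

lemma chain_ergodic {P : Measure (Config d)} (hd : 0 < d) (h0 : 0 < q) (h1 : q ≤ 1)
    (hP : IsBernoulli d q P)
    {κ : Config d → Step d → ℝ} {φ : Config d → ℝ} (hpair : (κ, φ) ∈ Epairs d (P[|cluZero d]))
    (e0 : Step d) {F : Config d → unitInterval → Step d}
    (hF : Measurable (Function.uncurry F))
    (h : ∀ ω, (volume : Measure unitInterval).map (F ω) =
        ∑ e, ENNReal.ofReal (fixK κ e0 ω e) • Measure.dirac e) :
    Ergodic (skew (envMap F))
      ((statM (P[|cluZero d]) φ).prod (iidLaw (volume : Measure unitInterval))) := by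
  haveI := hP.1
  have hst := stationary hP hpair e0 hF h
  have hg := good_ae hP hpair
  have hpos := phi_pos hd h0 h1 hP hpair
  obtain ⟨⟨hκm, hκ0, -, -, -⟩, hφm, hφ0, hφ1, -⟩ := hpair
  haveI := statM_prob hφ0 hφ1
  refine skew_ergodic (measurable_envMap hF) hst fun A hA hAi => ?_
  have hac : P[|cluZero d] ≪ statM (P[|cluZero d]) φ := by
    refine withDensity_absolutelyContinuous' hφm.ennreal_ofReal.aemeasurable ?_
    filter_upwards [hpos] with ω hω
    simpa using hω
  have hac' : statM (P[|cluZero d]) φ ≪ P[|cluZero d] := withDensity_absolutelyContinuous _ _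
  have h2 : ∀ᵐ ω ∂P, ω ∈ cluZero d →
      ∀ᵐ v ∂(volume : Measure unitInterval), (ω ∈ A ↔ envMap F ω v ∈ A) :=
    ae_cond_iff'.1 (hac.ae_le (Measure.ae_ae_of_ae_prod hAi))
  have hz : ∀ B : Set (Config d), MeasurableSet B → P (cluZero d ∩ B) = 0 →
      statM (P[|cluZero d]) φ B = 0 := by
    intro B hB hB0
    refine hac' ?_
    rw [cond_apply measurableSet_cluZero, hB0, mul_zero]
  refine (cluster_ergodic hd h0 h1 hP hA ?_).imp (hz A hA) (hz _ hA.compl)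
  filter_upwards [hg, h2] with ω hω hv hc e he hωA
  have hG := GoodAt.self hω hc
  set e' : Step d := ⟨e, mem_Ud_of_edgeOpen he⟩ with he'
  have hk : 0 < κ ω e' := lt_of_le_of_ne (hκ0 _ _) fun hz => (hG.2.1 e').1 hz.symm he
  have hm : (volume : Measure unitInterval) {v | F ω v = e'} ≠ 0 := by
    rw [repr_apply hF h, fixK_good e0 hG]; simpa using hk
  by_contra hn
  refine hm (measure_mono_null ?_ (ae_iff.1 (hv hc)))
  intro v (hv' : F ω v = e')
  simp only [Set.mem_setOf_eq, envMap, hv', he']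
  exact fun hh => hn (hh.1 hωA)

end Station

section Final

variable {d : ℕ} {q : ℝ}

lemma integral_repr {P : Measure (Config d)} (hP : IsBernoulli d q P)
    {κ : Config d → Step d → ℝ} {φ : Config d → ℝ} (hpair : (κ, φ) ∈ Epairs d (P[|cluZero d]))
    (e0 : Step d) {F : Config d → unitInterval → Step d}
    (hF : Measurable (Function.uncurry F))
    (h : ∀ ω, (volume : Measure unitInterval).map (F ω) =
        ∑ e, ENNReal.ofReal (fixK κ e0 ω e) • Measure.dirac e)
    (f : EnvSp d → ℝ) (hf : Measurable f) (C : ℝ) (hC : ∀ x, |f x| ≤ C) :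
    ∫ q, f (q.1, stp F q) ∂((statM (P[|cluZero d]) φ).prod
        (iidLaw (volume : Measure unitInterval))) =
      ∫ ω, φ ω * ∑ e : Step d, f (ω, e) * κ ω e ∂(P[|cluZero d]) := by
  haveI := hP.1
  have hg := good_ae hP hpair
  obtain ⟨⟨hκm, hκ0, -, -, -⟩, hφm, hφ0, hφ1, -⟩ := hpair
  haveI := statM_prob hφ0 hφ1
  have hgm : Measurable (fun q : Config d × (ℕ → unitInterval) => f (q.1, stp F q)) :=
    hf.comp (measurable_fst.prodMk (measurable_stp hF))
  rw [integral_prod _ (bdd_integrable hgm fun x => hC _)]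
  have hin : ∀ ω, ∫ u, f (ω, stp F (ω, u)) ∂(iidLaw (volume : Measure unitInterval)) =
      ∑ e : Step d, f (ω, e) * fixK κ e0 ω e := by
    intro ω
    have hFω : Measurable (F ω) := hF.comp measurable_prodMk_left
    have hfω : Measurable (fun e : Step d => f (ω, e)) := hf.comp measurable_prodMk_left
    have e1 : ∫ u, f (ω, stp F (ω, u)) ∂(iidLaw (volume : Measure unitInterval)) =
        ∫ v, f (ω, F ω v) ∂(volume : Measure unitInterval) := by
      have hmp := measurePreserving_eval_infinitePi
        (fun _ : ℕ => (volume : Measure unitInterval)) 0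
      conv_rhs => rw [← hmp.map_eq]
      rw [integral_map (f := fun v => f (ω, F ω v)) hmp.measurable.aemeasurable
        (hfω.comp hFω).aestronglyMeasurable]
      rfl
    rw [e1, ← integral_map (f := fun e => f (ω, e)) hFω.aemeasurable hfω.aestronglyMeasurable, h,
      integral_finset_sum_measure]
    · refine Finset.sum_congr rfl fun e _ => ?_
      rw [integral_smul_measure, integral_dirac, ENNReal.toReal_ofReal (fixK_nonneg hκ0 e0 ω e),
        smul_eq_mul, mul_comm]
    · intro e _
      exact (integrable_dirac (by simp)).smul_measure ENNReal.ofReal_ne_top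
  simp_rw [hin]
  rw [statM, integral_withDensity_eq_integral_toReal_smul hφm.ennreal_ofReal (by simp)]
  refine integral_congr_ae ?_
  have := ae_cond_iff'.2 (hg.mono fun ω hω hc => GoodAt.self hω hc)
  filter_upwards [this] with ω hω
  rw [ENNReal.toReal_ofReal (hφ0 ω), smul_eq_mul]
  simp_rw [fixK_good e0 hω]

lemma qPE_le {F : Config d → unitInterval → Step d}
    (hF : Measurable (Function.uncurry F)) {κ κ' : Config d → Step d → ℝ}
    (hκ : ∀ ω e, 0 ≤ κ' ω e)
    (hFκ : ∀ ω e, (volume : Measure unitInterval) {v | F ω v = e} = ENNReal.ofReal (κ' ω e))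
    (N : ℕ) (ω : Config d) (hp : ∀ s : Fin N → Step d, pathProb κ ω s = pathProb κ' ω s)
    (A : Set (Fin N → Step d)) :
    qPE κ ω A = iidLaw (volume : Measure unitInterval) {u | preW F N (ω, u) ∈ A} := by
  classical
  have hm : Measurable (fun u => preW F N (ω, u)) :=
    (measurable_preW hF N).comp measurable_prodMk_left
  have hnn : ∀ s : Fin N → Step d, 0 ≤ pathProb κ' ω s := fun s =>
    Finset.prod_nonneg fun k _ => hκ _ _
  unfold qPE qP
  simp_rw [hp]
  rw [ENNReal.ofReal_sum_of_nonneg (fun s _ => Set.indicator_nonneg (fun s _ => hnn s) s)]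
  have hA : {u | preW F N (ω, u) ∈ A} =
      ⋃ s ∈ Finset.univ.filter (fun s => s ∈ A), {u | preW F N (ω, u) = s} := by
    ext u; simp
  rw [hA, measure_biUnion_finset, Finset.sum_filter]
  · refine Finset.sum_congr rfl fun s _ => ?_
    rw [pathProb_repr hF hκ hFκ]
    by_cases hs : s ∈ A <;> simp [hs]
  · intro s _ t _ hst
    exact Set.disjoint_left.2 fun u (hu : _ = s) (hv : _ = t) => hst (hu.symm.trans hv)
  · intro s _
    exact hm (measurableSet_singleton s)

theorem main_aux (hd : 0 < d) (h0 : 0 < q) (h1 : q ≤ 1)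
    (P : Measure (Config d)) (hP : IsBernoulli d q P)
    (κ : Config d → Step d → ℝ) (φ : Config d → ℝ) (hpair : (κ, φ) ∈ Epairs d (P[|cluZero d]))
    (f : BoundedContinuousFunction (EnvSp d) ℝ) :
    ∀ᵐ ω ∂(P[|cluZero d]), ∀ ε : ℝ, 0 < ε →
      Filter.Tendsto (fun n : ℕ => ⨆ N : ℕ, qPE κ ω
          {s : Fin N → Step d | ∃ m : ℕ, n ≤ m ∧ m ≤ N ∧
            ε < |(m : ℝ)⁻¹ * partialSumF (⇑f) ω s m -
              ∫ ω', φ ω' * ∑ e : Step d, f (ω', e) * κ ω' e ∂(P[|cluZero d])|})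
        Filter.atTop (nhds 0) := by
  haveI := hP.1
  let e0 : Step d := ⟨unitVec d ⟨0, hd⟩, by simp [Ud]⟩
  haveI : Nonempty (Step d) := ⟨e0⟩
  have hg := good_ae hP hpair
  have hpos := phi_pos hd h0 h1 hP hpair
  have hkm := fixK_meas hpair.1.1 e0
  have hk0 := fixK_nonneg hpair.1.2.1 e0
  have hφm : Measurable φ := hpair.2.1
  obtain ⟨F, hF, h⟩ := exists_repr hkm hk0 (fixK_sum κ e0)
  haveI : IsProbabilityMeasure (statM (P[|cluZero d]) φ) :=
    statM_prob hpair.2.2.1 hpair.2.2.2.1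
  have herg := chain_ergodic hd h0 h1 hP hpair e0 hF h
  have hfm : Measurable (⇑f) := f.continuous.measurable
  have hfC : ∀ x, |f x| ≤ ‖f‖ := fun x => f.norm_coe_le_norm x
  have h_intg := integral_repr hP hpair e0 hF h f hfm _ hfC
  have hgm : Measurable (fun q : Config d × (ℕ → unitInterval) => f (q.1, stp F q)) :=
    hfm.comp (measurable_fst.prodMk (measurable_stp hF))
  have hb := birkhoff_pointwise herg hgm (fun x => hfC _)
  rw [h_intg] at hb
  set L := ∫ ω', φ ω' * ∑ e : Step d, f (ω', e) * κ ω' e ∂(P[|cluZero d]) with hL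
  have hac : P[|cluZero d] ≪ statM (P[|cluZero d]) φ := by
    refine withDensity_absolutelyContinuous' hφm.ennreal_ofReal.aemeasurable ?_
    filter_upwards [hpos] with ω hω
    simpa using hω
  have hb2 := hac.ae_le (Measure.ae_ae_of_ae_prod hb)
  have hg2 := ae_cond_iff'.2 (hg.mono fun ω hω (hc : ω ∈ cluZero d) => And.intro hc hω)
  filter_upwards [hb2, hg2] with ω hbω hgω ε hε
  set T := skew (envMap F) with hT
  set g : Config d × (ℕ → unitInterval) → ℝ := fun q => f (q.1, stp F q) with hgdef
  set B : ℕ → Set (ℕ → unitInterval) := fun n =>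
    {u | ∃ m, n ≤ m ∧ ε < |birkhoffAverage ℝ T g m (ω, u) - L|} with hB
  have hTm : Measurable T := measurable_skew (measurable_envMap hF)
  have hBm : ∀ n, MeasurableSet (B n) := by
    intro n
    have : B n = ⋃ m, ⋃ (_ : n ≤ m), {u | ε < |birkhoffAverage ℝ T g m (ω, u) - L|} := by
      ext u; simp [hB]
    rw [this]
    refine MeasurableSet.iUnion fun m => MeasurableSet.iUnion fun _ => ?_
    have hm : Measurable (fun u => birkhoffAverage ℝ T g m (ω, u)) := by
      have : Measurable (birkhoffAverage ℝ T g m) := by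
        unfold birkhoffAverage birkhoffSum
        have hsum : Measurable (fun x => ∑ k ∈ Finset.range m, g (T^[k] x)) :=
          Finset.measurable_sum _ fun k _ => hgm.comp (hTm.iterate k)
        exact hsum.const_smul ((m : ℝ)⁻¹)
      exact this.comp measurable_prodMk_left
    exact measurableSet_lt measurable_const (measurable_norm.comp (hm.sub_const L))
  have hlim : Tendsto (fun n => iidLaw (volume : Measure unitInterval) (B n)) atTop (𝓝 0) := by
    have ht := tendsto_measure_iInter_atTop (μ := iidLaw (volume : Measure unitInterval))
      (s := B) (fun n => (hBm n).nullMeasurableSet)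
      (fun a b hab u ⟨m, hm, h⟩ => ⟨m, hab.trans hm, h⟩) ⟨0, measure_ne_top _ _⟩
    have hz : iidLaw (volume : Measure unitInterval) (⋂ n, B n) = 0 := by
      refine measure_eq_zero_iff_ae_notMem.2 ?_
      filter_upwards [hbω] with u hu hmem
      obtain ⟨n, hn⟩ := (Metric.tendsto_atTop.1 hu) ε hε
      obtain ⟨m, hm, hlt⟩ := Set.mem_iInter.1 hmem n
      have := hn m hm
      rw [Real.dist_eq] at this
      linarith
    rwa [hz] at ht
  refine tendsto_of_tendsto_of_tendsto_of_le_of_le tendsto_const_nhds hlim (fun _ => bot_le) ?_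
  intro n
  refine iSup_le fun N => ?_
  rw [qPE_le hF hk0 (repr_apply hF h) N ω (fun s => pathProb_fix e0 N ω hgω.1 hgω.2 s)]
  refine measure_mono ?_
  rintro u ⟨m, hnm, hmN, hlt⟩
  refine ⟨m, hnm, ?_⟩
  rw [partialSum_preW F f N ω u m hmN] at hlt
  exact hlt

end Final

end SRWPC

open SRWPC in
/-- **Ergodic theorem along the walk** (Corollary 3.3): for any `(π̃,φ) ∈ ℰ`,
`P₀`-a.s. in `ω`, the empirical averages of `f` converge `P₀^{π̃,ω}`-a.s. to
`∫ φ(ω) Σ_e f(ω,e) π̃(ω,e) dP₀`.  (Almost-sure convergence of the trajectory averages is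
expressed through the quenched probabilities of the finite-horizon bad events.) -/
theorem ergodic_theorem_along_walk
    (d : ℕ) (hd : 2 ≤ d) (p : ℝ) (hp0 : 0 < p) (hp1 : p < 1) (hpc : pc d < p)
    (P : Measure (Config d)) (hP : IsBernoulli d p P)
    (κ : Config d → Step d → ℝ) (φ : Config d → ℝ) (hpair : (κ, φ) ∈ Epairs d (P[|cluZero d]))
    (f : BoundedContinuousFunction (EnvSp d) ℝ) :
    ∀ᵐ ω ∂(P[|cluZero d]), ∀ ε : ℝ, 0 < ε →
      Filter.Tendsto (fun n : ℕ => ⨆ N : ℕ, qPE κ ω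
          {s : Fin N → Step d | ∃ m : ℕ, n ≤ m ∧ m ≤ N ∧
            ε < |(m : ℝ)⁻¹ * partialSumF (⇑f) ω s m -
              ∫ ω', φ ω' * ∑ e : Step d, f (ω', e) * κ ω' e ∂(P[|cluZero d])|})
        Filter.atTop (nhds 0) := by
  exact main_aux (by omega) hp0 hp1.le P hP κ φ hpair f
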